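/- arXiv:2310.08136 — 6 statements merged into one kernel-verified Lean document; each statement's English description precedes it below -/
import Mathlib

section
/- Let f : ℂ² → ℂ² be complex entire and real for real arguments, let v ∈ ℂ² be a real point with f(v) = 0, and suppose the derivative Df(v) has one real negative eigenvalue μ⁻ < 0 and one real positive eigenvalue μ⁺ > 0 (a hyperbolic saddle). Then every complex entire function Γ : ℂ → ℂ² which is real for real arguments, satisfies Γ'(t) = f(Γ(t)) for all t ∈ ℂ, and satisfies Γ(σ) → v as the real variable σ → ±∞, is constant equal to v. (This is the planar case N = 2 of the nonexistence of complex entire homoclinic orbits: for a planar saddle the eigenvalues are automatically real and nonresonant.) -/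
/-- A point of `ℂ²` is real if every coordinate has zero imaginary part. -/
def IsRealPt (x : EuclideanSpace ℂ (Fin 2)) : Prop := ∀ j, (x j).im = 0

/-!
In coordinates adapted to the eigenvectors, a solution `Z` in complex time which tends to the saddle
as `t → +∞` along the reals decays almost as fast as `exp (a t)`, where `Re a < 0` is the stable
eigenvalue. The linear flow has period `w = 2πi / a` in the stable direction, so the displacement
`Z (t + w) - Z t` is produced by the quadratic part of the field alone and is `o(exp (a t))`. But
this displacement solves an asymptotically linear equation, whose nonzero bounded solutions decay no
faster than `exp (a t)`; hence it vanishes, and by the identity theorem `Z` has period `w`. As `Z`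
is small on a half-strip of width `w`, it is then bounded on a half-plane.

In reversed time the unstable eigenvalue `b` provides a second period, parallel to `2πi / b`, and
boundedness on a half-plane opening to the left. If the two periods are linearly independent over
`ℝ`, a compact parallelogram carries all values of the solution; if they are parallel, the two
half-planes leave out a strip which is compact modulo a period. Either way the solution is bounded,
and Liouville's theorem makes it constant.
-/

open Filter Function Metric Set Topology
open scoped InnerProductSpace Real

section Gronwall

lemma monotoneOn_mul_exp_neg {D : Set ℝ} (hD : Convex ℝ D) {φ φ' u u' : ℝ → ℝ}
    (hφ : ∀ t ∈ D, HasDerivAt φ (φ' t) t) (hu : ∀ t ∈ D, HasDerivAt u (u' t) t)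
    (h : ∀ t ∈ D, u' t * φ t ≤ φ' t) :
    MonotoneOn (fun t => φ t * Real.exp (-u t)) D := by
  have hderiv : ∀ t ∈ D, HasDerivAt (fun t => φ t * Real.exp (-u t))
      (φ' t * Real.exp (-u t) + φ t * (Real.exp (-u t) * -u' t)) t := fun t ht =>
    (hφ t ht).mul (hu t ht).neg.exp
  refine monotoneOn_of_hasDerivWithinAt_nonneg hD
    (fun t ht => (hderiv t ht).continuousAt.continuousWithinAt)
    (fun t ht => (hderiv t (interior_subset ht)).hasDerivWithinAt) fun t ht => ?_
  calc 0 ≤ (φ' t - u' t * φ t) * Real.exp (-u t) :=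
        mul_nonneg (sub_nonneg.2 (h t (interior_subset ht))) (Real.exp_pos _).le
    _ = φ' t * Real.exp (-u t) + φ t * (Real.exp (-u t) * -u' t) := by ring

lemma norm_le_mul_exp_of_norm_deriv_le {E : Type*} [NormedAddCommGroup E] [NormedSpace ℝ E]
    {g g' : ℝ → E} {b c r L Λ : ℝ} (hg : ∀ x, HasDerivAt g (g' x) x)
    (hg' : ∀ x, ‖g x‖ ≤ r → ‖g' x‖ ≤ L * ‖g x‖) (hL : L < Λ) (hΛ : 0 ≤ Λ) (hc : 0 < c)
    (h0 : ‖g 0‖ ≤ c) (hr : c * Real.exp (Λ * b) ≤ r) {x : ℝ} (hx : x ∈ Icc 0 b) :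
    ‖g x‖ ≤ c * Real.exp (Λ * x) := by
  refine image_norm_le_of_norm_deriv_right_lt_deriv_boundary
    (B := fun x => c * Real.exp (Λ * x)) (B' := fun x => Λ * (c * Real.exp (Λ * x)))
    (fun x _ => (hg x).continuousAt.continuousWithinAt)
    (fun x _ => (hg x).hasDerivWithinAt) (by simpa using h0) (fun x => ?_) ?_ hx
  · exact ((((hasDerivAt_id x).const_mul Λ).exp).const_mul c).congr_deriv (by
      simp only [id, mul_one]; ring)
  · intro x hx hgx
    have hpos : 0 < ‖g x‖ := hgx ▸ by positivity
    have hle : ‖g x‖ ≤ r := by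
      rw [hgx]
      refine le_trans ?_ hr
      gcongr
      exact hx.2.le
    calc ‖g' x‖ ≤ L * ‖g x‖ := hg' x hle
      _ < Λ * ‖g x‖ := by gcongr
      _ = Λ * (c * Real.exp (Λ * x)) := by rw [hgx]

lemma tendsto_const_mul_exp_neg_mul_atTop {k : ℝ} (hk : 0 < k) (C : ℝ) :
    Tendsto (fun t : ℝ => C * Real.exp (-(k * t))) atTop (𝓝 0) := by
  simpa using (Real.tendsto_exp_neg_atTop_nhds_zero.comp
    (tendsto_id.const_mul_atTop hk)).const_mul C

end Gronwall

section BlockEstimates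

lemma abs_inner_le_mul_sq {V : Type*} [NormedAddCommGroup V] [InnerProductSpace ℝ V] {x w : V}
    {c ρ : ℝ} (hx : ‖x‖ ≤ ρ) (hw : ‖w‖ ≤ c * ρ) : |⟪x, w⟫_ℝ| ≤ c * ρ ^ 2 :=
  calc |⟪x, w⟫_ℝ| ≤ ‖x‖ * ‖w‖ := abs_real_inner_le_norm x w
    _ ≤ ρ * (c * ρ) := by gcongr; exact (norm_nonneg x).trans hx
    _ = c * ρ ^ 2 := by ring

variable {V W : Type*} [NormedAddCommGroup V] [InnerProductSpace ℝ V]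
  [NormedAddCommGroup W] [InnerProductSpace ℝ W]

/-- The curve `z = (x, y)` solves `x' = A x + R₁`, `y' = B y + R₂` for all times `t ≥ T`: a
block-diagonal equation perturbed by a forcing term `R`, which is allowed to depend on `z`. -/
def SolvesPerturbedBlock (A : V → V) (B : W → W) (R : ℝ → V × W) (T : ℝ) (z : ℝ → V × W) : Prop :=
  ∀ t ≥ T, HasDerivAt z ((A (z t).1, B (z t).2) + R t) t

namespace SolvesPerturbedBlock

variable {A : V → V} {B : W → W} {R z : ℝ → V × W} {T : ℝ}

lemma hasDerivAt_norm_sq_fst (hz : SolvesPerturbedBlock A B R T z) {t : ℝ} (ht : T ≤ t) :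
    HasDerivAt (fun t => ‖(z t).1‖ ^ 2)
      (2 * (⟪(z t).1, A (z t).1⟫_ℝ + ⟪(z t).1, (R t).1⟫_ℝ)) t := by
  rw [← inner_add_right]
  exact ((hz t ht).hasFDerivAt.fst.hasDerivAt).norm_sq.congr_deriv (by simp)

lemma hasDerivAt_norm_sq_snd (hz : SolvesPerturbedBlock A B R T z) {t : ℝ} (ht : T ≤ t) :
    HasDerivAt (fun t => ‖(z t).2‖ ^ 2)
      (2 * (⟪(z t).2, B (z t).2⟫_ℝ + ⟪(z t).2, (R t).2⟫_ℝ)) t := by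
  rw [← inner_add_right]
  exact ((hz t ht).hasFDerivAt.snd.hasDerivAt).norm_sq.congr_deriv (by simp)

-- Otherwise `‖y‖² - ‖x‖²` would be positive at some time and grow exponentially from then on.
lemma norm_eq_norm_fst_of_bounded {m ε C : ℝ} (hz : SolvesPerturbedBlock A B R T z)
    (hε : 0 ≤ ε) (hm : 2 * ε < m) (hA : ∀ x, ⟪x, A x⟫_ℝ ≤ -m * ‖x‖ ^ 2)
    (hB : ∀ y, m * ‖y‖ ^ 2 ≤ ⟪y, B y⟫_ℝ) (hR : ∀ t ≥ T, ‖R t‖ ≤ ε * ‖z t‖)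
    (hC : ∀ t ≥ T, ‖z t‖ ≤ C) {t : ℝ} (ht : T ≤ t) : ‖z t‖ = ‖(z t).1‖ := by
  rw [Prod.norm_def, sup_eq_left]
  set k := 2 * (m - 2 * ε)
  have hk0 : 0 < k := by linarith
  have hgrow : ∀ s ∈ Ici T, k * (‖(z s).2‖ ^ 2 - ‖(z s).1‖ ^ 2) ≤
      2 * (⟪(z s).2, B (z s).2⟫_ℝ + ⟪(z s).2, (R s).2⟫_ℝ) -
        2 * (⟪(z s).1, A (z s).1⟫_ℝ + ⟪(z s).1, (R s).1⟫_ℝ) := by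
    intro s hs
    have hfst := (abs_le.1 (abs_inner_le_mul_sq (norm_fst_le (z s))
      ((norm_fst_le (R s)).trans (hR s hs)))).2
    have hsnd := (abs_le.1 (abs_inner_le_mul_sq (norm_snd_le (z s))
      ((norm_snd_le (R s)).trans (hR s hs)))).1
    have hnorm : ε * ‖z s‖ ^ 2 ≤ ε * (‖(z s).1‖ ^ 2 + ‖(z s).2‖ ^ 2) := by
      gcongr
      rw [Prod.norm_def]
      rcases max_choice ‖(z s).1‖ ‖(z s).2‖ with h | h <;> rw [h] <;> simp
    have hpos : 0 ≤ (m - 2 * ε) * ‖(z s).1‖ ^ 2 := mul_nonneg (by linarith) (sq_nonneg _)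
    linarith [hA (z s).1, hB (z s).2]
  have hmono := monotoneOn_mul_exp_neg (convex_Ici T) (u := fun s => k * s) (u' := fun _ => k)
    (fun s hs => (hz.hasDerivAt_norm_sq_snd hs).sub (hz.hasDerivAt_norm_sq_fst hs))
    (fun s _ => by simpa using (hasDerivAt_id s).const_mul k) hgrow
  have hle : (‖(z t).2‖ ^ 2 - ‖(z t).1‖ ^ 2) * Real.exp (-(k * t)) ≤ 0 := by
    refine ge_of_tendsto (tendsto_const_mul_exp_neg_mul_atTop hk0 (C ^ 2)) ?_
    filter_upwards [eventually_ge_atTop t] with s hts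
    have hs : T ≤ s := ht.trans hts
    refine (hmono ht hs hts).trans ?_
    have hsnd : ‖(z s).2‖ ≤ C := (norm_snd_le _).trans (hC s hs)
    have hsq : ‖(z s).2‖ ^ 2 - ‖(z s).1‖ ^ 2 ≤ C ^ 2 := by
      have := pow_le_pow_left₀ (norm_nonneg _) hsnd 2
      linarith [sq_nonneg ‖(z s).1‖]
    exact mul_le_mul_of_nonneg_right hsq (Real.exp_pos _).le
  have hsq := nonpos_of_mul_nonpos_left hle (Real.exp_pos _)
  exact le_of_sq_le_sq (by linarith) (norm_nonneg _)

lemma exists_norm_le_mul_exp {a ε : ℝ} (hz : SolvesPerturbedBlock A B R T z)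
    (hA : ∀ x, ⟪x, A x⟫_ℝ ≤ -a * ‖x‖ ^ 2) (hR : ∀ t ≥ T, ‖R t‖ ≤ ε * ‖z t‖)
    (hcone : ∀ t ≥ T, ‖z t‖ = ‖(z t).1‖) :
    ∃ C > 0, ∀ t ≥ T, ‖z t‖ ≤ C * Real.exp (-((a - ε) * t)) := by
  set κ := a - ε with hκ
  have hmono := monotoneOn_mul_exp_neg (convex_Ici T)
    (u := fun t => -(2 * κ) * t) (u' := fun _ => -(2 * κ))
    (fun t ht => (hz.hasDerivAt_norm_sq_fst ht).neg)
    (fun t _ => by simpa using (hasDerivAt_id t).const_mul (-(2 * κ))) fun t ht => by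
      have hRx := (abs_le.1 (abs_inner_le_mul_sq (hcone t ht).ge
        ((norm_fst_le (R t)).trans (hR t ht)))).2
      rw [hcone t ht] at hRx
      have hA' := hA (z t).1
      simp only [Pi.neg_apply, hκ]
      linarith
  have hexp : ∀ t, Real.exp (-(-(2 * κ) * t)) = Real.exp (κ * t) ^ 2 := fun t => by
    rw [← Real.exp_nat_mul]
    congr 1
    push_cast
    ring
  refine ⟨‖(z T).1‖ * Real.exp (κ * T) + 1, by positivity, fun t ht => ?_⟩
  have hsq : (‖(z t).1‖ * Real.exp (κ * t)) ^ 2 ≤ (‖(z T).1‖ * Real.exp (κ * T)) ^ 2 := by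
    have := hmono (mem_Ici.2 le_rfl) ht ht
    simp only [Pi.neg_apply, hexp] at this
    linarith
  have hle := le_of_sq_le_sq hsq (by positivity)
  rw [hcone t ht, Real.exp_neg, ← div_eq_mul_inv, le_div_iff₀ (Real.exp_pos _)]
  linarith

lemma eq_zero_of_tendsto {a κ C : ℝ} (hz : SolvesPerturbedBlock A B R T z)
    (hκ : 0 < κ) (hC : 0 ≤ C) (hA : ∀ x, -a * ‖x‖ ^ 2 ≤ ⟪x, A x⟫_ℝ)
    (hR : ∀ t ≥ T, ‖R t‖ ≤ C * Real.exp (-(κ * t)) * ‖z t‖)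
    (hcone : ∀ t ≥ T, ‖z t‖ = ‖(z t).1‖)
    (hlim : Tendsto (fun t => Real.exp (a * t) * ‖z t‖) atTop (𝓝 0)) {t : ℝ} (ht : T ≤ t) :
    z t = 0 := by
  let u : ℝ → ℝ := fun t => -(2 * a) * t + 2 * C / κ * Real.exp (-(κ * t))
  have hu : ∀ t, HasDerivAt u (-(2 * a) - 2 * (C * Real.exp (-(κ * t)))) t := fun t => by
    refine (((hasDerivAt_id t).const_mul (-(2 * a))).add
      (((hasDerivAt_id t).const_mul κ).neg.exp.const_mul (2 * C / κ))).congr_deriv ?_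
    simp only [id, mul_one, Pi.neg_apply]
    field_simp
    ring
  have hmono := monotoneOn_mul_exp_neg (convex_Ici T)
    (fun t ht => hz.hasDerivAt_norm_sq_fst ht) (fun t _ => hu t) fun t ht => by
      have hRx := (abs_le.1 (abs_inner_le_mul_sq (hcone t ht).ge
        ((norm_fst_le (R t)).trans (hR t ht)))).1
      rw [hcone t ht] at hRx
      linarith [hA (z t).1]
  have hle : ‖(z t).1‖ ^ 2 * Real.exp (-u t) ≤ 0 := by
    have hlim2 : Tendsto (fun s => (Real.exp (a * s) * ‖z s‖) ^ 2) atTop (𝓝 0) := by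
      simpa using hlim.pow 2
    refine ge_of_tendsto hlim2 ?_
    filter_upwards [eventually_ge_atTop t] with s hts
    have hs : T ≤ s := ht.trans hts
    refine (hmono ht hs hts).trans ?_
    have hu_le : -u s ≤ 2 * (a * s) := by
      have : 0 ≤ 2 * C / κ * Real.exp (-(κ * s)) := by positivity
      simp only [u]
      linarith
    calc ‖(z s).1‖ ^ 2 * Real.exp (-u s)
        ≤ ‖(z s).1‖ ^ 2 * Real.exp (2 * (a * s)) := by gcongr
      _ = (Real.exp (a * s) * ‖z s‖) ^ 2 := by
          rw [hcone s hs, two_mul, Real.exp_add]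
          ring
  have hsq := nonpos_of_mul_nonpos_left hle (Real.exp_pos _)
  rw [← norm_eq_zero, hcone t ht]
  exact pow_eq_zero_iff two_ne_zero |>.1 (le_antisymm hsq (sq_nonneg _))

end SolvesPerturbedBlock

end BlockEstimates

section QuadraticRemainder

variable {E F : Type*} [NormedAddCommGroup E] [NormedAddCommGroup F]

/-- `N` vanishes to second order at the origin, in the form needed to compare two trajectories:
on the closed ball of radius `r`, its Lipschitz constant at distance `ρ` from `0` is at most
`K * ρ`. -/
structure IsQuadraticRemainder (N : E → F) (K r : ℝ) : Prop where
  map_zero : N 0 = 0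
  norm_sub_le : ∀ z w : E, ‖z‖ ≤ r → ‖w‖ ≤ r → ‖N z - N w‖ ≤ K * max ‖z‖ ‖w‖ * ‖z - w‖

namespace IsQuadraticRemainder

variable {N : E → F} {K r : ℝ}

lemma mono (hN : IsQuadraticRemainder N K r) {r' : ℝ} (h : r' ≤ r) :
    IsQuadraticRemainder N K r' :=
  ⟨hN.map_zero, fun z w hz hw => hN.norm_sub_le z w (hz.trans h) (hw.trans h)⟩

lemma norm_le (hN : IsQuadraticRemainder N K r) {z : E} (hz : ‖z‖ ≤ r) :
    ‖N z‖ ≤ K * ‖z‖ ^ 2 := by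
  have := hN.norm_sub_le z 0 hz (norm_zero.trans_le ((norm_nonneg z).trans hz))
  simpa [hN.map_zero, sq, mul_assoc] using this

end IsQuadraticRemainder

lemma norm_apply_add_sub_le_of_forall_norm_le_one [NormedSpace ℂ E] [NormedSpace ℂ F] {N : E → F}
    {r : ℝ} (hN : DifferentiableOn ℂ N (ball 0 (4 * r)))
    (hbound : ∀ z ∈ ball (0 : E) (4 * r), ‖N z‖ ≤ 1) {z w : E} (hz : ‖z‖ ≤ r) (hw : ‖w‖ < r) :
    ‖N (z + w) - N w‖ ≤ ‖z‖ / r := by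
  have hr : 0 < r := (norm_nonneg w).trans_lt hw
  have hsub : ball w (2 * r) ⊆ ball 0 (4 * r) :=
    ball_subset_ball' (by rw [dist_zero_right]; linarith)
  have hmaps : MapsTo N (ball w (2 * r)) (closedBall (N w) 2) := fun x hx => by
    rw [mem_closedBall, dist_eq_norm]
    have hw' := hbound w (hsub (mem_ball_self (by positivity)))
    linarith [norm_sub_le (N x) (N w), hbound x (hsub hx)]
  have hcauchy := Complex.dist_le_div_mul_dist_of_mapsTo_ball (hN.mono hsub) hmaps
    (z := z + w) (by rw [mem_ball, dist_eq_norm, add_sub_cancel_right]; linarith)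
  rw [dist_eq_norm, dist_eq_norm, add_sub_cancel_right] at hcauchy
  exact hcauchy.trans_eq (by field_simp)

-- The Cauchy estimate is applied to the increment `w ↦ N (z + w) - N w`, whose derivative at `0`
-- is that of `N` at `z`.
lemma norm_fderiv_le_of_forall_norm_le_one [NormedSpace ℂ E] [NormedSpace ℂ F] {N : E → F} {r : ℝ}
    (hr : 0 < r) (hN : DifferentiableOn ℂ N (ball 0 (4 * r)))
    (hbound : ∀ z ∈ ball (0 : E) (4 * r), ‖N z‖ ≤ 1) (hderiv : fderiv ℂ N 0 = 0) {z : E}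
    (hz : ‖z‖ ≤ r) : ‖fderiv ℂ N z‖ ≤ 2 / r ^ 2 * ‖z‖ := by
  have hincr : ∀ w : E, ‖w‖ < r → ‖N (z + w) - N w‖ ≤ ‖z‖ / r := fun w hw =>
    norm_apply_add_sub_le_of_forall_norm_le_one hN hbound hz hw
  have hdiff : ∀ x : E, ‖x‖ < 4 * r → DifferentiableAt ℂ N x := fun x hx =>
    hN.differentiableAt (isOpen_ball.mem_nhds (mem_ball_zero_iff.2 hx))
  have hshift : ∀ w : E, ‖w‖ < r → DifferentiableAt ℂ (fun w => N (z + w)) w := fun w hw =>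
    (differentiableAt_comp_add_left z).2 (hdiff (z + w) (by linarith [norm_add_le z w]))
  have hderiv_incr : fderiv ℂ (fun w => N (z + w) - N w) 0 = fderiv ℂ N z := by
    rw [fderiv_fun_sub (hshift 0 (by simpa)) (hdiff 0 (by simpa)), hderiv, sub_zero,
      fderiv_comp_add_left, add_zero]
  rw [← hderiv_incr]
  refine (Complex.norm_fderiv_le_div_of_mapsTo_ball (R₂ := 2 * (‖z‖ / r)) (fun w hw => ?_)
    (fun w hw => ?_) hr).trans_eq (by field_simp)
  all_goals rw [mem_ball_zero_iff] at hw
  · exact ((hshift w hw).sub (hdiff w (by linarith))).differentiableWithinAt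
  · rw [mem_closedBall, dist_eq_norm]
    linarith [norm_sub_le (N (z + w) - N w) (N (z + 0) - N 0), hincr w hw, hincr 0 (by simpa)]

lemma exists_isQuadraticRemainder [NormedSpace ℂ E] [NormedSpace ℂ F] {N : E → F}
    (hN : ∀ᶠ z in 𝓝 0, DifferentiableAt ℂ N z) (hderiv : fderiv ℂ N 0 = 0) (hzero : N 0 = 0) :
    ∃ K > 0, ∃ r > 0, IsQuadraticRemainder N K r := by
  have hbound : ∀ᶠ z in 𝓝 0, ‖N z‖ ≤ 1 := by
    filter_upwards [(hN.self_of_nhds.continuousAt.norm).eventually_lt_const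
      (show ‖N 0‖ < 1 by simp [hzero])] with z hz using hz.le
  obtain ⟨R, hR, hball⟩ := eventually_nhds_iff_ball.1 (hN.and hbound)
  obtain ⟨r, hr, rfl⟩ : ∃ r > 0, 4 * r = R := ⟨R / 4, by positivity, by ring⟩
  refine ⟨2 / r ^ 2, by positivity, r, hr, hzero, fun z w hz hw => ?_⟩
  refine (convex_closedBall (0 : E) (max ‖z‖ ‖w‖)).norm_image_sub_le_of_norm_fderiv_le (𝕜 := ℂ)
    (fun x hx => ?_) (fun x hx => ?_) (by simp) (by simp)
  all_goals have hx' : ‖x‖ ≤ max ‖z‖ ‖w‖ := mem_closedBall_zero_iff.1 hx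
  all_goals have hxr : ‖x‖ ≤ r := hx'.trans (max_le hz hw)
  · exact (hball x (mem_ball_zero_iff.2 (by linarith))).1
  · refine (norm_fderiv_le_of_forall_norm_le_one hr
      (fun x hx => (hball x hx).1.differentiableWithinAt) (fun x hx => (hball x hx).2)
      hderiv hxr).trans ?_
    gcongr

end QuadraticRemainder

lemma eq_of_forall_ofReal_ge_eq {E : Type*} [NormedAddCommGroup E] [NormedSpace ℂ E]
    [CompleteSpace E] {f g : ℂ → E} (hf : Differentiable ℂ f) (hg : Differentiable ℂ g) {T : ℝ}
    (h : ∀ s : ℝ, T ≤ s → f s = g s) : f = g := by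
  have hreal : ∃ᶠ s : ℝ in 𝓝[≠] (T + 1), f s = g s := by
    refine Eventually.frequently (nhdsWithin_le_nhds ?_)
    filter_upwards [eventually_ge_nhds (lt_add_one T)] with s hs using h s hs
  have hlim : Tendsto (fun s : ℝ => (s : ℂ)) (𝓝[≠] (T + 1)) (𝓝[≠] ((T + 1 : ℝ) : ℂ)) :=
    Complex.continuous_ofReal.continuousAt.continuousWithinAt.tendsto_nhdsWithin
      fun s hs => Complex.ofReal_injective.ne hs
  exact AnalyticOnNhd.eq_of_frequently_eq (hf.differentiableOn.analyticOnNhd isOpen_univ)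
    (hg.differentiableOn.analyticOnNhd isOpen_univ) (hlim.frequently hreal)

lemma real_inner_self_mul (a z : ℂ) : ⟪z, a * z⟫_ℝ = a.re * ‖z‖ ^ 2 := by
  rw [Complex.inner, ← Complex.normSq_eq_norm_sq, Complex.normSq_apply]
  simp only [Complex.mul_re, Complex.conj_re, Complex.mul_im, Complex.conj_im, mul_neg,
    sub_neg_eq_add]
  ring

section Periodic

lemma apply_add_mul_eq_fract_of_periodic {α : Type*} {g : ℂ → α} {w : ℂ} (hg : Periodic g w)
    (z : ℂ) (y : ℝ) : g (z + y * w) = g (z + (Int.fract y : ℝ) * w) := by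
  rw [← hg.sub_int_mul_eq ⌊y⌋, Int.fract]
  push_cast
  ring_nf

variable {E : Type*} [SeminormedAddCommGroup E] {g : ℂ → E} {u w w' : ℂ}

/-- `g` is bounded on a set of points `s + y * w` with `s` and `y` real and `s ≥ T`; for nonreal `w`
this is a half-plane whose boundary has direction `w`. -/
def BoundedOnHalfPlane (g : ℂ → E) (w : ℂ) : Prop :=
  ∃ T M, ∀ s : ℝ, T ≤ s → ∀ y : ℝ, ‖g (s + y * w)‖ ≤ M

lemma exists_norm_le_on_strip (hg : Continuous g) (hw : Periodic g w) (u : ℂ) (p q : ℝ) :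
    ∃ M, ∀ x ∈ Icc p q, ∀ y : ℝ, ‖g (x * u + y * w)‖ ≤ M := by
  obtain ⟨M, hM⟩ := (isCompact_Icc.prod isCompact_Icc :
    IsCompact (Icc p q ×ˢ Icc (0 : ℝ) 1)).exists_bound_of_continuousOn
    (f := fun x : ℝ × ℝ => g (x.1 * u + x.2 * w)) (by fun_prop)
  refine ⟨M, fun x hx y => ?_⟩
  rw [apply_add_mul_eq_fract_of_periodic hw]
  exact hM (x, Int.fract y) ⟨hx, Int.fract_nonneg y, (Int.fract_lt_one y).le⟩

lemma exists_eq_mul_add_mul (h : LinearIndependent ℝ ![u, w]) (t : ℂ) :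
    ∃ x y : ℝ, t = x * u + y * w := by
  have hspan := h.span_eq_top_of_card_eq_finrank' (by simp)
  rw [Matrix.range_cons_cons_empty] at hspan
  obtain ⟨x, y, hxy⟩ := Submodule.mem_span_pair.1 (hspan ▸ Submodule.mem_top : t ∈ _)
  exact ⟨x, y, by simpa using hxy.symm⟩

lemma exists_norm_le_of_linearIndependent_periods (hg : Continuous g) (hw : Periodic g w)
    (hw' : Periodic g w') (h : LinearIndependent ℝ ![w, w']) : ∃ M, ∀ t, ‖g t‖ ≤ M := by
  obtain ⟨M, hM⟩ := exists_norm_le_on_strip hg hw' w 0 1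
  refine ⟨M, fun t => ?_⟩
  obtain ⟨x, y, rfl⟩ := exists_eq_mul_add_mul h t
  rw [add_comm, apply_add_mul_eq_fract_of_periodic hw, add_comm]
  exact hM _ ⟨Int.fract_nonneg x, (Int.fract_lt_one x).le⟩ y

lemma exists_norm_le_of_opposite_half_planes (hg : Continuous g) (hw : Periodic g w)
    (him : w.im ≠ 0) {c : ℝ} (hc : c ≠ 0) (hright : BoundedOnHalfPlane g w)
    (hleft : BoundedOnHalfPlane (fun t => g (-t)) (c * w)) : ∃ M, ∀ t, ‖g t‖ ≤ M := by
  obtain ⟨T, M, hM⟩ := hright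
  obtain ⟨T', M', hM'⟩ := hleft
  obtain ⟨M₀, hM₀⟩ := exists_norm_le_on_strip hg hw 1 (-T') T
  have hindep : LinearIndependent ℝ ![1, w] :=
    (LinearIndependent.pair_iff' one_ne_zero).2 fun x hx => him (by simp [← hx])
  refine ⟨max M (max M' M₀), fun t => ?_⟩
  obtain ⟨x, y, rfl⟩ := exists_eq_mul_add_mul hindep t
  rcases le_total T x with hx | hx
  · rw [mul_one]
    exact (hM x hx y).trans (le_max_left _ _)
  rcases le_total x (-T') with hx' | hx'
  · have hbound := hM' (-x) (le_neg.2 hx') (-y / c)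
    have hcoord : -(((-x : ℝ) : ℂ) + ((-y / c : ℝ) : ℂ) * (c * w)) = x * 1 + y * w := by
      have hc' : (c : ℂ) ≠ 0 := Complex.ofReal_ne_zero.2 hc
      push_cast
      field_simp
      ring
    beta_reduce at hbound
    rw [hcoord] at hbound
    exact hbound.trans ((le_max_left _ _).trans (le_max_right _ _))
  · exact (hM₀ x ⟨hx', hx⟩ y).trans ((le_max_right _ _).trans (le_max_right _ _))

lemma exists_norm_le_of_periodic_of_boundedOnHalfPlane (hg : Continuous g) (hw : Periodic g w)
    (hw' : Periodic g w') (him : w.im ≠ 0) (hw'₀ : w' ≠ 0) (hright : BoundedOnHalfPlane g w)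
    (hleft : BoundedOnHalfPlane (fun t => g (-t)) w') : ∃ M, ∀ t, ‖g t‖ ≤ M := by
  by_cases hindep : LinearIndependent ℝ ![w, w']
  · exact exists_norm_le_of_linearIndependent_periods hg hw hw' hindep
  have hw₀ : w ≠ 0 := fun h => him (by simp [h])
  rw [LinearIndependent.pair_iff' hw₀] at hindep
  push Not at hindep
  obtain ⟨c, rfl⟩ := hindep
  rw [Complex.real_smul] at hleft
  exact exists_norm_le_of_opposite_half_planes hg hw him (left_ne_zero_of_smul hw'₀) hright hleft

end Periodic

/-- The normal form `z' = (a z₁, b z₂) + N z`, with `Re a < 0 < Re b`, of a planar holomorphic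
vector field near a saddle placed at the origin. The nonlinearity is controlled on the closed ball
of radius `r` only, and `r` is so small that its Lipschitz constant there, `K * r`, is at most a
quarter of both linear rates. -/
structure PlanarSaddle where
  (a b : ℂ)
  N : ℂ × ℂ → ℂ × ℂ
  (K r : ℝ)
  K_pos : 0 < K
  r_pos : 0 < r
  isQuadraticRemainder : IsQuadraticRemainder N K r
  four_mul_le_neg_re : 4 * (K * r) ≤ -a.re
  four_mul_le_re : 4 * (K * r) ≤ b.re

namespace PlanarSaddle

variable (S : PlanarSaddle)

/-- The vector field of the saddle. -/
def field (z : ℂ × ℂ) : ℂ × ℂ := (S.a * z.1, S.b * z.2) + S.N z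

/-- `Z` is an entire solution, in complex time, of the differential equation of the saddle. -/
def IsSolution (Z : ℂ → ℂ × ℂ) : Prop := ∀ t, HasDerivAt Z (S.field (Z t)) t

/-- The period `2πi / a` of the linear flow `x ↦ exp (a t) x` in the stable direction. -/
noncomputable def period : ℂ := 2 * π * Complex.I / S.a

/-- The decay rate obtained for real solutions tending to the saddle. It falls short of the linear
rate `-Re a`, but exceeds half of it. -/
def rate : ℝ := -S.a.re - S.K * S.r

lemma K_mul_r_pos : 0 < S.K * S.r := mul_pos S.K_pos S.r_pos

lemma re_a_neg : S.a.re < 0 := by linarith [S.K_mul_r_pos, S.four_mul_le_neg_re]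

lemma a_ne_zero : S.a ≠ 0 := fun h => S.re_a_neg.ne (by simp [h])

lemma rate_pos : 0 < S.rate := by
  unfold rate
  linarith [S.K_mul_r_pos, S.four_mul_le_neg_re]

lemma neg_re_a_lt_two_mul_rate : -S.a.re < 2 * S.rate := by
  unfold rate
  linarith [S.K_mul_r_pos, S.four_mul_le_neg_re]

lemma norm_N_sub_le {z w : ℂ × ℂ} {ρ : ℝ} (hz : ‖z‖ ≤ ρ) (hw : ‖w‖ ≤ ρ) (hρ : ρ ≤ S.r) :
    ‖S.N z - S.N w‖ ≤ S.K * ρ * ‖z - w‖ := by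
  have hK := S.K_pos.le
  refine (S.isQuadraticRemainder.norm_sub_le z w (hz.trans hρ) (hw.trans hρ)).trans ?_
  gcongr
  exact max_le hz hw

lemma norm_N_le {z : ℂ × ℂ} (hz : ‖z‖ ≤ S.r) : ‖S.N z‖ ≤ S.K * S.r * ‖z‖ := by
  simpa [S.isQuadraticRemainder.map_zero] using
    S.norm_N_sub_le hz (norm_zero.trans_le S.r_pos.le) le_rfl

lemma norm_field_le {z : ℂ × ℂ} (hz : ‖z‖ ≤ S.r) :
    ‖S.field z‖ ≤ (‖S.a‖ + ‖S.b‖ + S.K * S.r) * ‖z‖ := by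
  have hlin : ‖(S.a * z.1, S.b * z.2)‖ ≤ (‖S.a‖ + ‖S.b‖) * ‖z‖ := by
    rw [Prod.norm_def, add_mul]
    refine (max_le_add_of_nonneg (norm_nonneg _) (norm_nonneg _)).trans ?_
    rw [norm_mul, norm_mul]
    gcongr
    exacts [norm_fst_le z, norm_snd_le z]
  rw [add_mul]
  exact (norm_add_le _ _).trans (add_le_add hlin (S.norm_N_le hz))

lemma norm_eq_norm_fst {R z : ℝ → ℂ × ℂ} {T C : ℝ}
    (hz : SolvesPerturbedBlock (S.a * ·) (S.b * ·) R T z)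
    (hR : ∀ t ≥ T, ‖R t‖ ≤ S.K * S.r * ‖z t‖) (hC : ∀ t ≥ T, ‖z t‖ ≤ C) :
    ∀ t ≥ T, ‖z t‖ = ‖(z t).1‖ := fun t ht =>
  hz.norm_eq_norm_fst_of_bounded (m := 4 * (S.K * S.r)) S.K_mul_r_pos.le
    (by linarith [S.K_mul_r_pos])
    (fun x => by
      rw [real_inner_self_mul]
      gcongr
      linarith [S.four_mul_le_neg_re])
    (fun y => by
      rw [real_inner_self_mul]
      gcongr
      exact S.four_mul_le_re) hR hC ht

namespace IsSolution

variable {S} {Z : ℂ → ℂ × ℂ}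

lemma hasDerivAt_along (hZ : S.IsSolution Z) (p q : ℂ) (x : ℝ) :
    HasDerivAt (fun x : ℝ => Z (p + x * q)) (q • S.field (Z (p + x * q))) x := by
  have hpath : HasDerivAt (fun x : ℝ => p + (x : ℂ) * q) q x := by
    simpa using ((Complex.ofRealCLM.hasDerivAt (x := x)).mul_const q).const_add p
  exact (hZ _).scomp x hpath

lemma hasDerivAt_ofReal_add (hZ : S.IsSolution Z) (c : ℂ) (t : ℝ) :
    HasDerivAt (fun t : ℝ => Z (t + c)) (S.field (Z (t + c))) t := by
  simpa [add_comm] using hZ.hasDerivAt_along c 1 t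

lemma hasDerivAt_ofReal (hZ : S.IsSolution Z) (t : ℝ) :
    HasDerivAt (fun t : ℝ => Z t) (S.field (Z t)) t := by
  simpa using hZ.hasDerivAt_ofReal_add 0 t

lemma solvesPerturbedBlock_sub (hZ : S.IsSolution Z) (c : ℂ) (T : ℝ) :
    SolvesPerturbedBlock (S.a * ·) (S.b * ·) (fun t => S.N (Z (t + c)) - S.N (Z t)) T
      (fun t : ℝ => Z (t + c) - Z t) := fun t _ =>
  ((hZ.hasDerivAt_ofReal_add c t).sub (hZ.hasDerivAt_ofReal t)).congr_deriv (by
    ext <;> simp [field] <;> ring)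

lemma exists_decay (hZ : S.IsSolution Z) (hlim : Tendsto (fun s : ℝ => Z s) atTop (𝓝 0)) :
    ∃ T, ∃ C > 0, ∀ s : ℝ, T ≤ s → ‖Z s‖ ≤ C * Real.exp (-(S.rate * s)) := by
  have hsmall : ∀ᶠ s : ℝ in atTop, ‖Z s‖ < S.r :=
    hlim.norm.eventually_lt_const (by simpa using S.r_pos)
  obtain ⟨T, hT⟩ := eventually_atTop.1 hsmall
  have hblock : SolvesPerturbedBlock (S.a * ·) (S.b * ·) (fun t => S.N (Z t)) T
      (fun t : ℝ => Z t) := fun t _ => hZ.hasDerivAt_ofReal t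
  have hR : ∀ t ≥ T, ‖S.N (Z t)‖ ≤ S.K * S.r * ‖Z t‖ := fun t ht => S.norm_N_le (hT t ht).le
  obtain ⟨C, hC, hdecay⟩ := hblock.exists_norm_le_mul_exp (a := -S.a.re)
    (fun x => by rw [real_inner_self_mul, neg_neg]) hR
    (S.norm_eq_norm_fst hblock hR fun t ht => (hT t ht).le)
  exact ⟨T, C, hC, hdecay⟩

end IsSolution

/-- On the half-strip of points `s + x * period` with `s ≥ T` and `0 ≤ x ≤ 1`, the curve `Z` is at
most `C * exp (-(rate * s))`, and this bound keeps it in the ball where `N` is controlled. -/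
def DecaysOnStrip (Z : ℂ → ℂ × ℂ) (C T : ℝ) : Prop :=
  ∀ s ≥ T, C * Real.exp (-(S.rate * s)) ≤ S.r ∧
    ∀ x ∈ Icc (0 : ℝ) 1, ‖Z (s + x * S.period)‖ ≤ C * Real.exp (-(S.rate * s))

lemma IsSolution.exists_decaysOnStrip {S : PlanarSaddle} {Z : ℂ → ℂ × ℂ} (hZ : S.IsSolution Z)
    (hlim : Tendsto (fun s : ℝ => Z s) atTop (𝓝 0)) : ∃ C T, S.DecaysOnStrip Z C T := by
  obtain ⟨T₀, C₀, hC₀, hdecay⟩ := hZ.exists_decay hlim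
  set L := ‖S.period‖ * (‖S.a‖ + ‖S.b‖ + S.K * S.r)
  have hL : 0 ≤ L := by have := S.K_mul_r_pos; positivity
  set C := C₀ * Real.exp (L + 1) with hC
  obtain ⟨T₁, hT₁⟩ := eventually_atTop.1
    ((tendsto_const_mul_exp_neg_mul_atTop S.rate_pos C).eventually_lt_const S.r_pos)
  refine ⟨C, max T₀ T₁, fun s hs => ?_⟩
  have hr := (hT₁ s ((le_max_right _ _).trans hs)).le
  refine ⟨hr, fun x hx => ?_⟩
  calc ‖Z (s + x * S.period)‖
      ≤ C₀ * Real.exp (-(S.rate * s)) * Real.exp ((L + 1) * x) := by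
        refine norm_le_mul_exp_of_norm_deriv_le (g := fun x : ℝ => Z (s + x * S.period)) (b := 1)
          (r := S.r) (hZ.hasDerivAt_along s S.period) (fun x hx => ?_) (lt_add_one L)
          (by positivity) (by positivity) ?_ ?_ hx
        · rw [norm_smul, mul_assoc]
          gcongr
          exact S.norm_field_le hx
        · simpa using hdecay s ((le_max_left _ _).trans hs)
        · rw [mul_one, mul_right_comm]
          exact hr
    _ ≤ C₀ * Real.exp (-(S.rate * s)) * Real.exp ((L + 1) * 1) := by
        gcongr
        exact hx.2
    _ = C * Real.exp (-(S.rate * s)) := by rw [hC]; ring_nf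

namespace DecaysOnStrip

variable {S} {Z : ℂ → ℂ × ℂ} {C T : ℝ}

lemma norm_le (h : S.DecaysOnStrip Z C T) {s : ℝ} (hs : T ≤ s) :
    ‖Z s‖ ≤ C * Real.exp (-(S.rate * s)) := by
  simpa using (h s hs).2 0 (by simp)

lemma norm_add_period_le (h : S.DecaysOnStrip Z C T) {s : ℝ} (hs : T ≤ s) :
    ‖Z (s + S.period)‖ ≤ C * Real.exp (-(S.rate * s)) := by
  simpa using (h s hs).2 1 (by simp)

lemma norm_N_sub_le (h : S.DecaysOnStrip Z C T) {s : ℝ} (hs : T ≤ s) :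
    ‖S.N (Z (s + S.period)) - S.N (Z s)‖ ≤
      S.K * (C * Real.exp (-(S.rate * s))) * ‖Z (s + S.period) - Z s‖ :=
  S.norm_N_sub_le (h.norm_add_period_le hs) (h.norm_le hs) (h s hs).1

lemma norm_N_le (h : S.DecaysOnStrip Z C T) {s x : ℝ} (hs : T ≤ s) (hx : x ∈ Icc 0 1) :
    ‖S.N (Z (s + x * S.period))‖ ≤ S.K * C ^ 2 * Real.exp (-(2 * S.rate * s)) := by
  have hK := S.K_pos.le
  have hbound := (h s hs).2 x hx
  calc ‖S.N (Z (s + x * S.period))‖ ≤ S.K * ‖Z (s + x * S.period)‖ ^ 2 :=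
        S.isQuadraticRemainder.norm_le (hbound.trans (h s hs).1)
    _ ≤ S.K * (C * Real.exp (-(S.rate * s))) ^ 2 := by gcongr
    _ = S.K * C ^ 2 * Real.exp (-(2 * S.rate * s)) := by
        rw [mul_pow, ← Real.exp_nat_mul]
        push_cast
        ring_nf

end DecaysOnStrip

lemma exp_neg_a_mul_add_period (t : ℂ) :
    Complex.exp (-S.a * (t + S.period)) = Complex.exp (-S.a * t) := by
  have : -S.a * (t + S.period) = -S.a * t - 2 * π * Complex.I := by
    have := S.a_ne_zero
    rw [period]
    field_simp
    ring
  rw [this, Complex.exp_periodic.sub_eq]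

lemma norm_exp_neg_a_mul (s x : ℝ) :
    ‖Complex.exp (-S.a * (s + x * S.period))‖ = Real.exp (-S.a.re * s) := by
  have : -S.a * (s + x * S.period) = -S.a * s - (2 * π * x : ℝ) * Complex.I := by
    have := S.a_ne_zero
    rw [period]
    push_cast
    field_simp
    ring
  rw [this, Complex.norm_exp]
  simp

-- In the coordinate `exp (-a t) z₁`, the displacement along the period is due to `N` alone.
lemma IsSolution.norm_fst_add_period_sub_le {S : PlanarSaddle} {Z : ℂ → ℂ × ℂ} {C T : ℝ}
    (hZ : S.IsSolution Z) (h : S.DecaysOnStrip Z C T) {s : ℝ} (hs : T ≤ s) :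
    ‖(Z (s + S.period) - Z s).1‖ ≤
      ‖S.period‖ * (S.K * C ^ 2 * Real.exp (-(2 * S.rate * s))) := by
  have hderiv : ∀ x : ℝ, HasDerivAt
      (fun x : ℝ => Complex.exp (-S.a * (s + x * S.period)) * (Z (s + x * S.period)).1)
      (Complex.exp (-S.a * (s + x * S.period)) *
        (S.period * (S.N (Z (s + x * S.period))).1)) x := by
    intro x
    have hexp : HasDerivAt (fun x : ℝ => Complex.exp (-S.a * (s + x * S.period)))
        (Complex.exp (-S.a * (s + x * S.period)) * (-S.a * S.period)) x := by
      simpa using ((((Complex.ofRealCLM.hasDerivAt (x := x)).mul_const S.period).const_add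
        (s : ℂ)).const_mul (-S.a)).cexp
    refine (hexp.mul (hZ.hasDerivAt_along s S.period x).hasFDerivAt.fst.hasDerivAt).congr_deriv ?_
    simp only [field, ContinuousLinearMap.comp_apply, ContinuousLinearMap.toSpanSingleton_apply,
      ContinuousLinearMap.coe_fst', one_smul, Prod.smul_fst, Prod.fst_add, smul_eq_mul]
    ring
  have hmean := norm_image_sub_le_of_norm_deriv_le_segment_01' (C := Real.exp (-S.a.re * s) *
      (‖S.period‖ * (S.K * C ^ 2 * Real.exp (-(2 * S.rate * s)))))
    (fun x _ => (hderiv x).hasDerivWithinAt) fun x hx => by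
      rw [norm_mul, norm_mul, S.norm_exp_neg_a_mul]
      gcongr
      exact (norm_fst_le _).trans (h.norm_N_le hs ⟨hx.1, hx.2.le⟩)
  have hnorm := S.norm_exp_neg_a_mul s 0
  simp only [Complex.ofReal_one, one_mul, Complex.ofReal_zero, zero_mul, add_zero,
    S.exp_neg_a_mul_add_period] at hmean hnorm
  rw [← mul_sub, norm_mul, hnorm] at hmean
  exact le_of_mul_le_mul_left hmean (Real.exp_pos _)

lemma IsSolution.apply_add_period_of_le {S : PlanarSaddle} {Z : ℂ → ℂ × ℂ} {C T : ℝ}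
    (hZ : S.IsSolution Z) (h : S.DecaysOnStrip Z C T) {s : ℝ} (hs : T ≤ s) :
    Z (s + S.period) = Z s := by
  have hblock := hZ.solvesPerturbedBlock_sub S.period T
  have hK := S.K_pos.le
  have hcone := S.norm_eq_norm_fst hblock (C := S.r + S.r)
    (fun t ht => (h.norm_N_sub_le ht).trans (by gcongr; exact (h t ht).1))
    (fun t ht => (norm_sub_le _ _).trans (add_le_add
      ((h.norm_add_period_le ht).trans (h t ht).1) ((h.norm_le ht).trans (h t ht).1)))
  have hlim : Tendsto (fun t : ℝ => Real.exp (-S.a.re * t) * ‖Z (t + S.period) - Z t‖) atTop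
      (𝓝 0) := by
    refine squeeze_zero' (.of_forall fun t => by positivity) ?_
      (tendsto_const_mul_exp_neg_mul_atTop (sub_pos.2 S.neg_re_a_lt_two_mul_rate)
        (‖S.period‖ * (S.K * C ^ 2)))
    filter_upwards [eventually_ge_atTop T] with t ht
    calc Real.exp (-S.a.re * t) * ‖Z (t + S.period) - Z t‖
        ≤ Real.exp (-S.a.re * t) *
          (‖S.period‖ * (S.K * C ^ 2 * Real.exp (-(2 * S.rate * t)))) := by
          rw [hcone t ht]
          gcongr
          exact hZ.norm_fst_add_period_sub_le h ht
      _ = ‖S.period‖ * (S.K * C ^ 2) * Real.exp (-((2 * S.rate - -S.a.re) * t)) := by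
          rw [show -((2 * S.rate - -S.a.re) * t) = -S.a.re * t + -(2 * S.rate * t) by ring,
            Real.exp_add]
          ring
  have hC : 0 ≤ C := nonneg_of_mul_nonneg_left ((norm_nonneg _).trans (h.norm_le hs))
    (Real.exp_pos _)
  have hzero := hblock.eq_zero_of_tendsto (a := -S.a.re) S.rate_pos (C := S.K * C)
    (by positivity) (fun x => by rw [real_inner_self_mul, neg_neg])
    (fun t ht => (h.norm_N_sub_le ht).trans_eq (by ring)) hcone hlim hs
  exact sub_eq_zero.1 hzero

theorem IsSolution.periodic_and_boundedOnHalfPlane {S : PlanarSaddle} {Z : ℂ → ℂ × ℂ}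
    (hZ : S.IsSolution Z) (hlim : Tendsto (fun s : ℝ => Z s) atTop (𝓝 0)) :
    Periodic Z S.period ∧ BoundedOnHalfPlane Z S.period := by
  obtain ⟨C, T, h⟩ := hZ.exists_decaysOnStrip hlim
  have hdiff : Differentiable ℂ Z := fun t => (hZ t).differentiableAt
  have hper : Periodic Z S.period := congrFun (eq_of_forall_ofReal_ge_eq
    (hdiff.comp (differentiable_id.add_const _)) hdiff fun s hs => hZ.apply_add_period_of_le h hs)
  refine ⟨hper, T, S.r, fun s hs y => ?_⟩
  rw [apply_add_mul_eq_fract_of_periodic hper]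
  exact ((h s hs).2 _ ⟨Int.fract_nonneg y, (Int.fract_lt_one y).le⟩).trans (h s hs).1

end PlanarSaddle

section EigenCoordinates

lemma exists_equiv_prod_of_hasEigenvalue {𝕜 E : Type*} [NontriviallyNormedField 𝕜]
    [CompleteSpace 𝕜] [NormedAddCommGroup E] [NormedSpace 𝕜 E] (hE : Module.finrank 𝕜 E = 2)
    {A : E →L[𝕜] E} {a b : 𝕜} (hab : a ≠ b) (ha : Module.End.HasEigenvalue A.toLinearMap a)
    (hb : Module.End.HasEigenvalue A.toLinearMap b) :
    ∃ L : (𝕜 × 𝕜) ≃L[𝕜] E, ∀ z, A (L z) = L (a * z.1, b * z.2) := by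
  obtain ⟨x, hx⟩ := ha.exists_hasEigenvector
  obtain ⟨y, hy⟩ := hb.exists_hasEigenvector
  have hindep : LinearIndependent 𝕜 ![x, y] :=
    Module.End.eigenvectors_linearIndependent' A.toLinearMap ![a, b]
      (by simpa [Injective, Fin.forall_fin_two] using ⟨hab, hab.symm⟩) ![x, y]
      (by simpa [Fin.forall_fin_two] using ⟨hx, hy⟩)
  have : FiniteDimensional 𝕜 E := Module.finite_of_finrank_pos (by omega)
  let L₀ : 𝕜 × 𝕜 →ₗ[𝕜] E :=
    (LinearMap.toSpanSingleton 𝕜 E x).coprod (LinearMap.toSpanSingleton 𝕜 E y)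
  have hL₀ : ∀ z, L₀ z = z.1 • x + z.2 • y := fun z => by simp [L₀]
  have hinj : Injective L₀ := (injective_iff_map_eq_zero L₀).2 fun z hz =>
    Prod.ext_iff.2 (LinearIndependent.pair_iff.1 hindep z.1 z.2 (hL₀ z ▸ hz))
  refine ⟨(LinearEquiv.ofInjectiveOfFinrankEq L₀ hinj (by simp [hE])).toContinuousLinearEquiv,
    fun z => ?_⟩
  have hAx : A x = a • x := hx.apply_eq_smul
  have hAy : A y = b • y := hy.apply_eq_smul
  change A (L₀ z) = L₀ (a * z.1, b * z.2)
  rw [hL₀, hL₀, map_add, map_smul, map_smul, hAx, hAy]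
  module

lemma exists_planarSaddle {a b : ℂ} {N : ℂ × ℂ → ℂ × ℂ} (ha : a.re < 0) (hb : 0 < b.re)
    (hN : ∀ᶠ z in 𝓝 0, DifferentiableAt ℂ N z) (hderiv : fderiv ℂ N 0 = 0) (hzero : N 0 = 0) :
    ∃ S : PlanarSaddle, S.a = a ∧ S.b = b ∧ S.N = N := by
  obtain ⟨K, hK, r, hr, hquad⟩ := exists_isQuadraticRemainder hN hderiv hzero
  set m := min (-a.re) b.re
  have hm : 0 < m := lt_min (neg_pos.2 ha) hb
  have hle : 4 * (K * min r (m / (4 * K))) ≤ m := by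
    calc 4 * (K * min r (m / (4 * K))) ≤ 4 * (K * (m / (4 * K))) := by
          gcongr
          exact min_le_right _ _
      _ = m := by field_simp
  exact ⟨{ a, b, N, K, r := min r (m / (4 * K)), K_pos := hK
           r_pos := lt_min hr (by positivity)
           isQuadraticRemainder := hquad.mono (min_le_left _ _)
           four_mul_le_neg_re := hle.trans (min_le_left _ _)
           four_mul_le_re := hle.trans (min_le_right _ _) }, rfl, rfl, rfl⟩

end EigenCoordinates

section Homoclinic

variable {E : Type*} [NormedAddCommGroup E] [NormedSpace ℂ E]

lemma fderiv_conj_sub_eq_zero {F : Type*} [NormedAddCommGroup F] [NormedSpace ℂ F]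
    {f : E → E} {v : E} {A : E →L[ℂ] E} (hA : HasFDerivAt f A v) {D : F →L[ℂ] F} {L : F ≃L[ℂ] E}
    (hL : ∀ z, A (L z) = L (D z)) : fderiv ℂ (fun z => L.symm (f (v + L z)) - D z) 0 = 0 := by
  have hA' : HasFDerivAt f A (v + L 0) := by rwa [map_zero, add_zero]
  have hconj := L.symm.hasFDerivAt.comp (0 : F) (hA'.comp (0 : F) (L.hasFDerivAt.const_add v))
  refine ((hconj.sub D.hasFDerivAt).congr_fderiv ?_).fderiv
  ext z
  simp [hL]

lemma exists_planarSaddle_conj (hE : Module.finrank ℂ E = 2) {f : E → E} {v : E}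
    (hf : ∀ᶠ x in 𝓝 v, DifferentiableAt ℂ f x) (hv : f v = 0) {A : E →L[ℂ] E}
    (hA : HasFDerivAt f A v) {a b : ℂ} (ha : a.re < 0) (hb : 0 < b.re)
    (heiga : Module.End.HasEigenvalue A.toLinearMap a)
    (heigb : Module.End.HasEigenvalue A.toLinearMap b) :
    ∃ (S : PlanarSaddle) (L : (ℂ × ℂ) ≃L[ℂ] E), S.a = a ∧
      ∀ z, S.field z = L.symm (f (v + L z)) := by
  obtain ⟨L, hL⟩ := exists_equiv_prod_of_hasEigenvalue hE
    (fun h => (ha.trans hb).ne (congrArg Complex.re h)) heiga heigb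
  let D : ℂ × ℂ →L[ℂ] ℂ × ℂ := (a • ContinuousLinearMap.fst ℂ ℂ ℂ).prod
    (b • ContinuousLinearMap.snd ℂ ℂ ℂ)
  have hD : ∀ z, D z = (a * z.1, b * z.2) := fun z => by simp [D]
  have htendsto : Tendsto (fun z => v + L z) (𝓝 0) (𝓝 v) :=
    (by fun_prop : Continuous fun z => v + L z).tendsto' _ _ (by simp)
  obtain ⟨S, rfl, rfl, hN⟩ := exists_planarSaddle (N := fun z => L.symm (f (v + L z)) - D z) ha hb
    (by
      filter_upwards [htendsto.eventually hf] with z hz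
      exact (L.symm.differentiableAt.comp z
        (hz.comp z (L.differentiableAt.const_add v))).sub D.differentiableAt)
    (fderiv_conj_sub_eq_zero hA fun z => by rw [hL, hD]) (by simp [hv])
  exact ⟨S, L, rfl, fun z => by rw [PlanarSaddle.field, hN, ← hD, add_sub_cancel]⟩

theorem periodic_and_boundedOnHalfPlane_of_tendsto (hE : Module.finrank ℂ E = 2) {f : E → E}
    {v : E} (hf : ∀ᶠ x in 𝓝 v, DifferentiableAt ℂ f x) (hv : f v = 0) {A : E →L[ℂ] E}
    (hA : HasFDerivAt f A v) {a b : ℂ} (ha : a.re < 0) (hb : 0 < b.re)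
    (heiga : Module.End.HasEigenvalue A.toLinearMap a)
    (heigb : Module.End.HasEigenvalue A.toLinearMap b) {Γ : ℂ → E}
    (hode : ∀ t, HasDerivAt Γ (f (Γ t)) t) (hlim : Tendsto (fun s : ℝ => Γ s) atTop (𝓝 v)) :
    Periodic Γ (2 * π * Complex.I / a) ∧ BoundedOnHalfPlane Γ (2 * π * Complex.I / a) := by
  obtain ⟨S, L, rfl, hfield⟩ := exists_planarSaddle_conj hE hf hv hA ha hb heiga heigb
  have hΓ : ∀ t, L (L.symm (Γ t - v)) + v = Γ t := fun t => by simp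
  have hZ : S.IsSolution fun t => L.symm (Γ t - v) := fun t => by
    rw [hfield, add_comm v, hΓ]
    exact L.symm.hasFDerivAt.comp_hasDerivAt t ((hode t).sub_const v)
  have hZlim : Tendsto (fun s : ℝ => L.symm (Γ s - v)) atTop (𝓝 0) :=
    (L.symm.continuous.tendsto' 0 0 (map_zero _)).comp (tendsto_sub_nhds_zero_iff.2 hlim)
  obtain ⟨hper, T, M, hM⟩ : Periodic _ (2 * π * Complex.I / S.a) ∧ BoundedOnHalfPlane _ _ :=
    hZ.periodic_and_boundedOnHalfPlane hZlim
  refine ⟨fun t => by simpa using hper t, T, ‖(L : ℂ × ℂ →L[ℂ] E)‖ * M + ‖v‖, fun s hs y => ?_⟩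
  rw [← hΓ]
  refine (norm_add_le _ _).trans (add_le_add_left ?_ _)
  exact (L : ℂ × ℂ →L[ℂ] E).le_opNorm_of_le (hM s hs y)

lemma im_two_pi_I_div_ne_zero {a : ℂ} (ha : a.re ≠ 0) : (2 * π * Complex.I / a).im ≠ 0 := by
  have ha' : a ≠ 0 := fun h => ha (by simp [h])
  simp [Complex.div_im, Real.pi_ne_zero, ha, ha']

theorem no_complex_entire_homoclinic_planar_general (hE : Module.finrank ℂ E = 2) {f : E → E}
    {v : E} (hf : ∀ᶠ x in 𝓝 v, DifferentiableAt ℂ f x) (hv : f v = 0) {A : E →L[ℂ] E}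
    (hA : HasFDerivAt f A v) {a b : ℂ} (ha : a.re < 0) (hb : 0 < b.re)
    (heiga : Module.End.HasEigenvalue A.toLinearMap a)
    (heigb : Module.End.HasEigenvalue A.toLinearMap b) {Γ : ℂ → E}
    (hode : ∀ t, HasDerivAt Γ (f (Γ t)) t) (hlim_top : Tendsto (fun s : ℝ => Γ s) atTop (𝓝 v))
    (hlim_bot : Tendsto (fun s : ℝ => Γ s) atBot (𝓝 v)) (t : ℂ) : Γ t = v := by
  obtain ⟨hper, hright⟩ :=
    periodic_and_boundedOnHalfPlane_of_tendsto hE hf hv hA ha hb heiga heigb hode hlim_top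
  have hode_neg : ∀ t, HasDerivAt (fun t => Γ (-t)) (-f (Γ (-t))) t := fun t =>
    ((hode (-t)).scomp t (hasDerivAt_neg t)).congr_deriv (neg_one_smul ℂ _)
  have hlim_neg : Tendsto (fun s : ℝ => Γ (-s : ℂ)) atTop (𝓝 v) := by
    simpa [comp_def] using hlim_bot.comp tendsto_neg_atTop_atBot
  have heig_neg : ∀ {c}, Module.End.HasEigenvalue A.toLinearMap c →
      Module.End.HasEigenvalue (-A).toLinearMap (-c) := fun hc =>
    Module.End.hasEigenvalue_neg_iff.2 (by rwa [neg_neg])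
  obtain ⟨hper_neg, hleft⟩ := periodic_and_boundedOnHalfPlane_of_tendsto hE
    (hf.mono fun x hx => hx.neg) (by simp [hv]) hA.neg (neg_lt_zero.2 hb) (neg_pos.2 ha)
    (heig_neg heigb) (heig_neg heiga) hode_neg hlim_neg
  have hper' : Periodic Γ (2 * π * Complex.I / -b) := fun t => by
    simpa [sub_eq_add_neg, add_comm] using hper_neg.sub_eq (-t)
  have hΓ : Differentiable ℂ Γ := fun t => (hode t).differentiableAt
  obtain ⟨M, hM⟩ := exists_norm_le_of_periodic_of_boundedOnHalfPlane hΓ.continuous hper hper'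
    (im_two_pi_I_div_ne_zero ha.ne) (fun h => im_two_pi_I_div_ne_zero (neg_lt_zero.2 hb).ne
      (congrArg Complex.im h)) hright hleft
  have hconst : ∀ s, Γ s = Γ t := fun s => hΓ.apply_eq_apply_of_bounded
    (isBounded_iff_forall_norm_le.2 ⟨M, forall_mem_range.2 hM⟩) s t
  exact tendsto_nhds_unique (tendsto_const_nhds.congr fun s : ℝ => (hconst s).symm) hlim_top

end Homoclinic

/-- Planar case: complex entire homoclinic orbits to a hyperbolic saddle of a planar
complex entire vector field (real for real arguments) cannot exist: any such entire
connecting orbit is constant. -/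
theorem no_complex_entire_homoclinic_planar
    (f : EuclideanSpace ℂ (Fin 2) → EuclideanSpace ℂ (Fin 2))
    (hf : Differentiable ℂ f)
    (hfreal : ∀ x, IsRealPt x → IsRealPt (f x))
    (v : EuclideanSpace ℂ (Fin 2)) (hv : IsRealPt v) (hveq : f v = 0)
    (A : EuclideanSpace ℂ (Fin 2) →L[ℂ] EuclideanSpace ℂ (Fin 2))
    (hA : HasFDerivAt f A v)
    (μm μp : ℝ) (hμm : μm < 0) (hμp : 0 < μp)
    (heigm : Module.End.HasEigenvalue (A.toLinearMap : Module.End ℂ (EuclideanSpace ℂ (Fin 2))) (μm : ℂ))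
    (heigp : Module.End.HasEigenvalue (A.toLinearMap : Module.End ℂ (EuclideanSpace ℂ (Fin 2))) (μp : ℂ))
    (Γ : ℂ → EuclideanSpace ℂ (Fin 2))
    (hΓ : Differentiable ℂ Γ)
    (hΓreal : ∀ σ : ℝ, IsRealPt (Γ σ))
    (hode : ∀ t : ℂ, HasDerivAt Γ (f (Γ t)) t)
    (hlimp : Filter.Tendsto (fun σ : ℝ => Γ σ) Filter.atTop (nhds v))
    (hlimm : Filter.Tendsto (fun σ : ℝ => Γ σ) Filter.atBot (nhds v)) :
    ∀ t : ℂ, Γ t = v :=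
  no_complex_entire_homoclinic_planar_general finrank_euclideanSpace_fin (.of_forall hf) hveq
    hA (by simpa) (by simpa) heigm heigp hode hlimp hlimm
end

section
/- Let Γ : ℂ → ℂ^N be complex entire, let ω ∈ ℝ, and let σ₀ ≤ σ₁ be real numbers. Assume: (a) for each i ∈ {0,1} the Fourier coefficient a_ω(σ_i), i.e. the limit of A_T(σ_i) as T → ∞, exists; (b) there exists a sequence T_n → ∞ of positive reals such that sup over σ ∈ [σ₀, σ₁] of (1/T_n)·e^{−ωσ}·‖e^{−iωT_n}Γ(σ + iT_n) − Γ(σ)‖ tends to 0 as n → ∞. Then the scaled Fourier coefficients coincide: e^{−ωσ₀}·a_ω(σ₀) = e^{−ωσ₁}·a_ω(σ₁). -/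
open Filter

/-- The finite-time vertical Fourier average
`A_T(σ) = (1/T) ∫₀ᵀ e^{-iωτ} Γ(σ + iτ) dτ`. -/
noncomputable def fourierAvg {N : ℕ} (Γ : ℂ → EuclideanSpace ℂ (Fin N)) (ω σ T : ℝ) :
    EuclideanSpace ℂ (Fin N) :=
  (1 / T : ℝ) • ∫ τ in (0:ℝ)..T,
    Complex.exp (-(Complex.I * ω * τ)) • Γ ((σ : ℂ) + (τ : ℂ) * Complex.I)

/-!
The function `z ↦ e^{-ωz} Γ(z)` is holomorphic, and its mean over the vertical segment from `σ` to
`σ + iT` is `e^{-ωσ} A_T(σ)`. Applying Cauchy's theorem to the rectangle with corners `σ₀` and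
`σ₁ + iT`, the difference of the two vertical integrals equals, up to a factor `i`, the difference
of the horizontal ones, which the boundary hypothesis makes `o(Tₙ)`.
-/

section RectangleIntegrals

open Set Complex MeasureTheory
open scoped Interval

variable {E : Type*} [NormedAddCommGroup E] [NormedSpace ℂ E]

lemma I_smul_integral_vertical_sub_eq_integral_horizontal_sub {f : ℂ → E} {a b c d : ℝ}
    (hc : ContinuousOn f ([[a, b]] ×ℂ [[c, d]]))
    (hd : DifferentiableOn ℂ f (uIoo a b ×ℂ uIoo c d)) :
    I • ((∫ y in c..d, f (b + y * I)) - ∫ y in c..d, f (a + y * I)) =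
      ∫ x in a..b, (f (x + d * I) - f (x + c * I)) := by
  have integrable_horizontal (y : ℝ) (hy : y ∈ [[c, d]]) :
      IntervalIntegrable (fun x : ℝ => f (x + y * I)) volume a b := by
    refine (hc.comp (by fun_prop) fun x hx => ?_).intervalIntegrable
    simpa [mem_reProdIm] using And.intro hx hy
  have cauchy := integral_boundary_rect_eq_zero_of_continuousOn_of_differentiableOn f ⟨a, c⟩ ⟨b, d⟩
    hc hd
  rw [intervalIntegral.integral_sub (integrable_horizontal d right_mem_uIcc)
    (integrable_horizontal c left_mem_uIcc), smul_sub, ← sub_eq_zero, ← cauchy]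
  abel

lemma norm_integral_vertical_sub_le {f : ℂ → E} {a b c d : ℝ}
    (hc : ContinuousOn f ([[a, b]] ×ℂ [[c, d]]))
    (hd : DifferentiableOn ℂ f (uIoo a b ×ℂ uIoo c d)) :
    ‖(∫ y in c..d, f (b + y * I)) - ∫ y in c..d, f (a + y * I)‖ ≤
      |∫ x in a..b, ‖f (x + d * I) - f (x + c * I)‖| := by
  rw [← one_mul ‖_ - _‖, ← norm_I, ← norm_smul,
    I_smul_integral_vertical_sub_eq_integral_horizontal_sub hc hd]
  exact intervalIntegral.norm_integral_le_abs_integral_norm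

lemma norm_intervalIntegral_le_iSup_norm_mul {F : Type*} [NormedAddCommGroup F] [NormedSpace ℝ F]
    {g : ℝ → F} {a b : ℝ} (hab : a ≤ b) (hg : ContinuousOn g (Icc a b)) :
    ‖∫ x in a..b, g x‖ ≤ (⨆ x : Icc a b, ‖g x‖) * (b - a) := by
  have bdd : BddAbove (range fun x : Icc a b => ‖g x‖) := by
    simpa only [image_eq_range] using isCompact_Icc.bddAbove_image hg.norm
  rw [← abs_of_nonneg (sub_nonneg.2 hab)]
  refine intervalIntegral.norm_integral_le_of_norm_le_const fun x hx => ?_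
  rw [uIoc_of_le hab] at hx
  exact le_ciSup bdd ⟨x, Ioc_subset_Icc_self hx⟩

end RectangleIntegrals

section VerticalAverages

open Set Complex
open scoped Interval Topology

variable {E : Type*} [NormedAddCommGroup E] [NormedSpace ℂ E]

/-- The vertical Fourier average `A_T(σ)` of a function with values in any complex normed space;
`fourierAvg` is the case of `EuclideanSpace ℂ (Fin N)`. -/
noncomputable def verticalFourierAvg (Γ : ℂ → E) (ω σ T : ℝ) : E :=
  (1 / T : ℝ) • ∫ τ in (0 : ℝ)..T, exp (-(I * ω * τ)) • Γ (σ + τ * I)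

/-- The exponential twist `z ↦ e^{-ωz} Γ(z)`, which turns scaled vertical Fourier averages of `Γ`
into plain vertical averages. -/
noncomputable def expTwist (ω : ℝ) (Γ : ℂ → E) (z : ℂ) : E :=
  exp (-(ω * z)) • Γ z

/-- The scaled horizontal boundary contribution
`(1/T) e^{-ωσ} ‖e^{-iωT} Γ(σ + iT) - Γ(σ)‖`, which measures how far `Γ` is from being multiplied by
`e^{iωT}` under the shift by `iT`. -/
noncomputable def horizontalDefect (Γ : ℂ → E) (ω T σ : ℝ) : ℝ :=
  (1 / T) * Real.exp (-(ω * σ)) * ‖exp (-(I * ω * T)) • Γ (σ + T * I) - Γ σ‖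

variable {Γ : ℂ → E} {ω σ₀ σ₁ T : ℝ}

lemma continuousOn_expTwist {s : Set ℂ} (hΓ : ContinuousOn Γ s) :
    ContinuousOn (expTwist ω Γ) s := by
  unfold expTwist
  fun_prop

lemma differentiableOn_expTwist {s : Set ℂ} (hΓ : DifferentiableOn ℂ Γ s) :
    DifferentiableOn ℂ (expTwist ω Γ) s := by
  unfold expTwist
  fun_prop

lemma expTwist_add_mul_I (Γ : ℂ → E) (ω σ τ : ℝ) :
    expTwist ω Γ (σ + τ * I) =
      Real.exp (-(ω * σ)) • (exp (-(I * ω * τ)) • Γ (σ + τ * I)) := by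
  have exp_split : exp (-(ω * (σ + τ * I))) = Real.exp (-(ω * σ)) * exp (-(I * ω * τ)) := by
    rw [ofReal_exp, ← exp_add]
    push_cast
    ring_nf
  rw [expTwist, exp_split, mul_smul, coe_smul]

lemma exp_smul_verticalFourierAvg (Γ : ℂ → E) (ω σ T : ℝ) :
    Real.exp (-(ω * σ)) • verticalFourierAvg Γ ω σ T =
      (1 / T) • ∫ τ in (0 : ℝ)..T, expTwist ω Γ (σ + τ * I) := by
  simp only [expTwist_add_mul_I, intervalIntegral.integral_smul]
  rw [verticalFourierAvg, smul_comm]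

lemma horizontalDefect_eq_norm_expTwist_sub (Γ : ℂ → E) (ω T σ : ℝ) :
    horizontalDefect Γ ω T σ = (1 / T) * ‖expTwist ω Γ (σ + T * I) - expTwist ω Γ σ‖ := by
  have expTwist_real : expTwist ω Γ σ = Real.exp (-(ω * σ)) • Γ σ := by
    simpa using expTwist_add_mul_I Γ ω σ 0
  rw [expTwist_add_mul_I, expTwist_real, ← smul_sub, norm_smul, Real.norm_of_nonneg (by positivity),
    horizontalDefect, mul_assoc]

lemma horizontalDefect_nonneg (hT : 0 ≤ T) (σ : ℝ) : 0 ≤ horizontalDefect Γ ω T σ := by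
  unfold horizontalDefect
  positivity

lemma continuous_horizontalDefect (hΓ : Continuous Γ) : Continuous (horizontalDefect Γ ω T) := by
  unfold horizontalDefect
  fun_prop

lemma norm_exp_smul_verticalFourierAvg_sub_le (hT : 0 < T)
    (hc : ContinuousOn Γ ([[σ₀, σ₁]] ×ℂ Icc 0 T))
    (hd : DifferentiableOn ℂ Γ (uIoo σ₀ σ₁ ×ℂ Ioo 0 T)) :
    ‖Real.exp (-(ω * σ₁)) • verticalFourierAvg Γ ω σ₁ T -
        Real.exp (-(ω * σ₀)) • verticalFourierAvg Γ ω σ₀ T‖ ≤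
      |∫ σ in σ₀..σ₁, horizontalDefect Γ ω T σ| := by
  rw [← uIcc_of_le hT.le] at hc
  rw [← uIoo_of_le hT.le] at hd
  have vertical_le := norm_integral_vertical_sub_le (continuousOn_expTwist (ω := ω) hc)
    (differentiableOn_expTwist hd)
  simp only [exp_smul_verticalFourierAvg, horizontalDefect_eq_norm_expTwist_sub,
    intervalIntegral.integral_const_mul]
  rw [← smul_sub, norm_smul, abs_mul, Real.norm_eq_abs]
  simpa using mul_le_mul_of_nonneg_left vertical_le (abs_nonneg (1 / T))

lemma tendsto_integral_horizontalDefect_of_tendsto_iSup {ι : Type*} {l : Filter ι} {T : ι → ℝ}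
    (hσ : σ₀ ≤ σ₁) (hΓ : Continuous Γ) (hT : ∀ᶠ n in l, 0 < T n)
    (hsup : Tendsto (fun n => ⨆ σ : Icc σ₀ σ₁, horizontalDefect Γ ω (T n) σ) l (𝓝 0)) :
    Tendsto (fun n => ∫ σ in σ₀..σ₁, horizontalDefect Γ ω (T n) σ) l (𝓝 0) := by
  have bound_tendsto := hsup.mul_const (σ₁ - σ₀)
  rw [zero_mul] at bound_tendsto
  refine squeeze_zero_norm' ?_ bound_tendsto
  filter_upwards [hT] with n hn
  have defect_continuousOn : ContinuousOn (horizontalDefect Γ ω (T n)) (Icc σ₀ σ₁) :=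
    (continuous_horizontalDefect hΓ).continuousOn
  simpa only [Real.norm_of_nonneg (horizontalDefect_nonneg hn.le _)] using
    norm_intervalIntegral_le_iSup_norm_mul hσ defect_continuousOn

theorem scaled_fourier_coefficient_invariant_general [CompleteSpace E] {ι : Type*} {l : Filter ι}
    [l.NeBot] {T : ι → ℝ} {a₀ a₁ : E}
    (hc : ContinuousOn Γ ([[σ₀, σ₁]] ×ℂ Ici 0))
    (hd : DifferentiableOn ℂ Γ (uIoo σ₀ σ₁ ×ℂ Ioi 0))
    (hT : ∀ᶠ n in l, 0 < T n)
    (ha₀ : Tendsto (fun n => verticalFourierAvg Γ ω σ₀ (T n)) l (𝓝 a₀))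
    (ha₁ : Tendsto (fun n => verticalFourierAvg Γ ω σ₁ (T n)) l (𝓝 a₁))
    (hdefect : Tendsto (fun n => ∫ σ in σ₀..σ₁, horizontalDefect Γ ω (T n) σ) l (𝓝 0)) :
    Real.exp (-(ω * σ₀)) • a₀ = Real.exp (-(ω * σ₁)) • a₁ := by
  have sub_tendsto := (ha₁.const_smul (Real.exp (-(ω * σ₁)))).sub
    (ha₀.const_smul (Real.exp (-(ω * σ₀))))
  have sub_tendsto_zero : Tendsto (fun n => Real.exp (-(ω * σ₁)) • verticalFourierAvg Γ ω σ₁ (T n) -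
      Real.exp (-(ω * σ₀)) • verticalFourierAvg Γ ω σ₀ (T n)) l (𝓝 0) := by
    refine squeeze_zero_norm' ?_ (by simpa only [abs_zero] using hdefect.abs)
    filter_upwards [hT] with n hn
    exact norm_exp_smul_verticalFourierAvg_sub_le hn
      (hc.mono (inter_subset_inter_right _ (preimage_mono Icc_subset_Ici_self)))
      (hd.mono (inter_subset_inter_right _ (preimage_mono Ioo_subset_Ioi_self)))
  exact (sub_eq_zero.1 (tendsto_nhds_unique sub_tendsto sub_tendsto_zero)).symm

end VerticalAverages

/-- Invariance of the scaled Fourier coefficients: if the vertical Fourier coefficients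
`a_ω(σ₀)`, `a_ω(σ₁)` of a complex entire `Γ` exist, and along some sequence `Tₙ → ∞` the
horizontal boundary contributions tend to zero uniformly on `[σ₀, σ₁]`, then
`e^{-ωσ₀} a_ω(σ₀) = e^{-ωσ₁} a_ω(σ₁)`. -/
theorem scaled_fourier_coefficient_invariant
    (N : ℕ) (Γ : ℂ → EuclideanSpace ℂ (Fin N)) (hΓ : Differentiable ℂ Γ)
    (ω σ₀ σ₁ : ℝ) (hσ : σ₀ ≤ σ₁)
    (a₀ a₁ : EuclideanSpace ℂ (Fin N))
    (ha₀ : Tendsto (fun T : ℝ => fourierAvg Γ ω σ₀ T) atTop (nhds a₀))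
    (ha₁ : Tendsto (fun T : ℝ => fourierAvg Γ ω σ₁ T) atTop (nhds a₁))
    (T : ℕ → ℝ) (hTpos : ∀ n, 0 < T n) (hT : Tendsto T atTop atTop)
    (hbound : Tendsto (fun n : ℕ =>
      ⨆ σ : Set.Icc σ₀ σ₁, (1 / T n) * Real.exp (-(ω * (σ : ℝ))) *
        ‖Complex.exp (-(Complex.I * ω * T n)) •
            Γ (((σ : ℝ) : ℂ) + (T n : ℂ) * Complex.I) - Γ ((σ : ℝ) : ℂ)‖)
      atTop (nhds 0)) :
    Real.exp (-(ω * σ₀)) • a₀ = Real.exp (-(ω * σ₁)) • a₁ :=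
  scaled_fourier_coefficient_invariant_general hΓ.continuous.continuousOn hΓ.differentiableOn
    (.of_forall hTpos) (ha₀.comp hT) (ha₁.comp hT)
    (tendsto_integral_horizontalDefect_of_tendsto_iSup hσ hΓ.continuous (.of_forall hTpos) hbound)
end

section
/- Let Γ : ℂ → ℂ^N be complex entire and let v⁻, v⁺ ∈ ℂ^N. Assume: (i) Γ(σ + iτ) → v⁻ as σ → −∞, uniformly in τ ∈ ℝ; (ii) Γ(σ + iτ) → v⁺ as σ → +∞, uniformly in τ ∈ ℝ; (iii) Γ is bounded on every vertical strip {t ∈ ℂ : a ≤ Re t ≤ b} with a ≤ b real. Then Γ is constant; in particular v⁻ = v⁺. (This is the complex-analytic core of the nonexistence of complex entire heteroclinic orbits: the value of the vertical average of Γ is independent of Re t and equals both asymptotic limits.) -/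
/-!
Near `Re t = -∞` and `Re t = +∞` the map is bounded because it converges there uniformly in `Im t`,
and what remains of the plane is a vertical strip, on which it is bounded by assumption. So the map
is bounded on all of `ℂ`, hence constant by Liouville's theorem, and its value is both limits.
-/

open Bornology Filter Function Set
open scoped Topology

section Boundedness

variable {α β X : Type*} [LinearOrder β] {ρ : α → β}

theorem isBounded_range_of_tendsto_comap_atBot_atTop [Nonempty β] [PseudoMetricSpace X]
    {f : α → X} {x y : X} (hbot : Tendsto f (comap ρ atBot) (𝓝 x))
    (htop : Tendsto f (comap ρ atTop) (𝓝 y))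
    (hmid : ∀ a b, IsBounded (f '' (ρ ⁻¹' Icc a b))) :
    IsBounded (range f) := by
  obtain ⟨s, hs, hs_bdd⟩ := Metric.exists_isBounded_image_of_tendsto hbot
  obtain ⟨a, -, ha⟩ := (atBot_basis.comap ρ).mem_iff.1 hs
  obtain ⟨t, ht, ht_bdd⟩ := Metric.exists_isBounded_image_of_tendsto htop
  obtain ⟨b, -, hb⟩ := (atTop_basis.comap ρ).mem_iff.1 ht
  refine ((hs_bdd.union (hmid a b)).union ht_bdd).subset ?_
  have hcover : univ ⊆ s ∪ ρ ⁻¹' Icc a b ∪ t := by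
    intro z _
    rcases le_total (ρ z) a with hza | hza
    · exact .inl (.inl (ha hza))
    · rcases le_total (ρ z) b with hzb | hzb
      · exact .inl (.inr ⟨hza, hzb⟩)
      · exact .inr (hb hzb)
  rw [← image_univ, ← image_union, ← image_union]
  exact image_mono hcover

theorem forall_isBounded_image_preimage_Icc_iff [SeminormedAddCommGroup X] {f : α → X} :
    (∀ a b, IsBounded (f '' (ρ ⁻¹' Icc a b))) ↔
      ∀ a b, a ≤ b → ∃ C : ℝ, ∀ z, a ≤ ρ z → ρ z ≤ b → ‖f z‖ ≤ C := by
  simp only [isBounded_iff_forall_norm_le, forall_mem_image, mem_preimage, mem_Icc, and_imp]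
  refine forall₂_congr fun a b ↦ ⟨fun h _ ↦ h, fun h ↦ ?_⟩
  rcases le_or_gt a b with hab | hba
  · exact h hab
  · exact ⟨0, fun z haz hzb ↦ absurd (haz.trans hzb) hba.not_ge⟩

end Boundedness

section LimitsAlongRe

variable {F : Type*} [SeminormedAddCommGroup F] {f : ℂ → F} {v : F}

theorem tendsto_comap_re_atBot_nhds_iff :
    Tendsto f (comap Complex.re atBot) (𝓝 v) ↔
      ∀ ε : ℝ, 0 < ε → ∃ a : ℝ, ∀ σ : ℝ, σ ≤ a → ∀ τ : ℝ, ‖f (σ + τ * Complex.I) - v‖ < ε := by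
  simp [(atBot_basis.comap Complex.re).tendsto_iff Metric.nhds_basis_ball, Complex.forall,
    Complex.mk_eq_add_mul_I, dist_eq_norm, forall_comm (α := ℝ) (β := _ ≤ _)]

theorem tendsto_comap_re_atTop_nhds_iff :
    Tendsto f (comap Complex.re atTop) (𝓝 v) ↔
      ∀ ε : ℝ, 0 < ε → ∃ a : ℝ, ∀ σ : ℝ, a ≤ σ → ∀ τ : ℝ, ‖f (σ + τ * Complex.I) - v‖ < ε := by
  simp [(atTop_basis.comap Complex.re).tendsto_iff Metric.nhds_basis_ball, Complex.forall,
    Complex.mk_eq_add_mul_I, dist_eq_norm, forall_comm (α := ℝ) (β := _ ≤ _)]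

end LimitsAlongRe

theorem entire_uniform_heteroclinic_constant_general
    {E F : Type*} [NormedAddCommGroup E] [NormedSpace ℂ E] [NormedAddCommGroup F] [NormedSpace ℂ F]
    {Γ : E → F} (hΓ : Differentiable ℂ Γ) {ρ : E → ℝ} (hρ : Surjective ρ) {vm vp : F}
    (hlimm : Tendsto Γ (comap ρ atBot) (𝓝 vm)) (hlimp : Tendsto Γ (comap ρ atTop) (𝓝 vp))
    (hbdd : ∀ a b, IsBounded (Γ '' (ρ ⁻¹' Icc a b))) :
    (∀ s t : E, Γ s = Γ t) ∧ vm = vp := by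
  have hconst : ∀ s t, Γ s = Γ t := hΓ.apply_eq_apply_of_bounded <|
    isBounded_range_of_tendsto_comap_atBot_atTop hlimm hlimp hbdd
  have eq_of_tendsto {l : Filter E} [l.NeBot] {v : F} (h : Tendsto Γ l (𝓝 v)) : Γ 0 = v :=
    tendsto_nhds_unique (tendsto_const_nhds.congr (hconst 0)) h
  have : (comap ρ atBot).NeBot := atBot_neBot.comap_of_surj hρ
  have : (comap ρ atTop).NeBot := atTop_neBot.comap_of_surj hρ
  exact ⟨hconst, (eq_of_tendsto hlimm).symm.trans (eq_of_tendsto hlimp)⟩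

/-- A complex entire map `Γ : ℂ → ℂ^N` with limits `v⁻` (as `Re t → -∞`) and `v⁺`
(as `Re t → +∞`), uniformly in the imaginary part, and bounded on every vertical strip,
is constant; in particular `v⁻ = v⁺`. -/
theorem entire_uniform_heteroclinic_constant
    (N : ℕ) (Γ : ℂ → EuclideanSpace ℂ (Fin N)) (hΓ : Differentiable ℂ Γ)
    (vm vp : EuclideanSpace ℂ (Fin N))
    (hlimm : ∀ ε : ℝ, 0 < ε → ∃ σm : ℝ, ∀ σ : ℝ, σ ≤ σm → ∀ τ : ℝ,
      ‖Γ ((σ : ℂ) + (τ : ℂ) * Complex.I) - vm‖ < ε)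
    (hlimp : ∀ ε : ℝ, 0 < ε → ∃ σp : ℝ, ∀ σ : ℝ, σp ≤ σ → ∀ τ : ℝ,
      ‖Γ ((σ : ℂ) + (τ : ℂ) * Complex.I) - vp‖ < ε)
    (hbdd : ∀ a b : ℝ, a ≤ b → ∃ C : ℝ, ∀ t : ℂ, a ≤ t.re → t.re ≤ b → ‖Γ t‖ ≤ C) :
    (∀ s t : ℂ, Γ s = Γ t) ∧ vm = vp :=
  entire_uniform_heteroclinic_constant_general hΓ Complex.re_surjective
    (tendsto_comap_re_atBot_nhds_iff.2 hlimm) (tendsto_comap_re_atTop_nhds_iff.2 hlimp)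
    (forall_isBounded_image_preimage_Icc_iff.2 hbdd)
end

section
/- Let q : ℝ → ℝ be continuous and let h : ℝ → ℝ be differentiable with h'(x) = −2·h(x) + q(x) for all x ∈ ℝ. Let z : ℝ → ℝ be twice differentiable with z''(t) + z'(t)² + q(z(t)) = 0 for all t ∈ ℝ, and define H(t) := (1/2)·z'(t)² + h(z(t)). Then H'(t) = −2·z'(t)·H(t) for all t, and consequently H(t)·e^{2z(t)} is constant in t; equivalently H(t) = H(t₀)·e^{−2(z(t) − z(t₀))} for all t, t₀ ∈ ℝ. In particular, if z(t₀) = a, z'(t₀) = 0, and h(a) = 0 for some t₀, then H ≡ 0, so H = (1/2)ż² + h(z) is a conserved quantity vanishing along the orbit through (a, 0). -/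
/-!
For `z̈ + f(z) ż² + q(z) = 0` and `h' = -2fh + q`, the terms in `q` cancel in
`d/dt (ż²/2 + h(z)) = ż z̈ + h'(z) ż`, and what remains is `-2 f(z) ż (ż²/2 + h(z))`. So
`H = ż²/2 + h(z)` solves a homogeneous linear equation, with integrating factor `exp (2 F(z))`
where `F' = f`. The case `f = 1`, `F = id` is the time reversible equation.
-/

theorem hasDerivAt_half_sq_add_comp {𝕜 : Type*} [NontriviallyNormedField 𝕜] [NeZero (2 : 𝕜)]
    {z v h : 𝕜 → 𝕜} {t a c r : 𝕜} (hz : HasDerivAt z (v t) t)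
    (hv : HasDerivAt v a t) (hode : a + c * v t ^ 2 + r = 0)
    (hh : HasDerivAt h (-2 * c * h (z t) + r) (z t)) :
    HasDerivAt (fun τ => 1 / 2 * v τ ^ 2 + h (z τ))
      (-2 * c * v t * (1 / 2 * v t ^ 2 + h (z t))) t := by
  have h_kinetic : HasDerivAt (fun τ => 1 / 2 * v τ ^ 2) (v t * a) t :=
    ((hv.fun_pow 2).const_mul (1 / 2)).congr_deriv (by simp [field])
  have h_potential : HasDerivAt (fun τ => h (z τ)) ((-2 * c * h (z t) + r) * v t) t :=
    hh.comp t hz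
  have h_cancel : v t * a + (-2 * c * h (z t) + r) * v t =
      -2 * c * v t * (1 / 2 * v t ^ 2 + h (z t)) := by
    field_simp
    linear_combination v t * hode
  exact (h_kinetic.fun_add h_potential).congr_deriv h_cancel

section IntegratingFactor

variable {E : Type*} [NormedAddCommGroup E] [NormedSpace ℝ E] {s : Set ℝ} {φ φ' : ℝ → ℝ}
  {y : ℝ → E} {t t₀ : ℝ}

theorem exp_smul_eq_of_hasDerivAt_neg_smul (hs : IsOpen s) (hs' : IsPreconnected s)
    (hφ : ∀ t ∈ s, HasDerivAt φ (φ' t) t) (hy : ∀ t ∈ s, HasDerivAt y (-φ' t • y t) t)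
    (ht : t ∈ s) (ht₀ : t₀ ∈ s) :
    Real.exp (φ t) • y t = Real.exp (φ t₀) • y t₀ := by
  have h_deriv : ∀ τ ∈ s, HasDerivAt (fun τ => Real.exp (φ τ) • y τ) 0 τ := fun τ hτ =>
    ((hφ τ hτ).exp.fun_smul (hy τ hτ)).congr_deriv (by module)
  exact hs.is_const_of_deriv_eq_zero hs'
    (fun τ hτ => (h_deriv τ hτ).differentiableAt.differentiableWithinAt)
    (fun τ hτ => (h_deriv τ hτ).deriv) ht ht₀

theorem eq_exp_neg_sub_smul_of_hasDerivAt_neg_smul (hs : IsOpen s) (hs' : IsPreconnected s)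
    (hφ : ∀ t ∈ s, HasDerivAt φ (φ' t) t) (hy : ∀ t ∈ s, HasDerivAt y (-φ' t • y t) t)
    (ht : t ∈ s) (ht₀ : t₀ ∈ s) :
    y t = Real.exp (-(φ t - φ t₀)) • y t₀ := by
  calc y t = Real.exp (-φ t) • Real.exp (φ t) • y t := by
        rw [smul_smul, ← Real.exp_add, neg_add_cancel, Real.exp_zero, one_smul]
    _ = Real.exp (-φ t) • Real.exp (φ t₀) • y t₀ := by
        rw [exp_smul_eq_of_hasDerivAt_neg_smul hs hs' hφ hy ht ht₀]
    _ = Real.exp (-(φ t - φ t₀)) • y t₀ := by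
        rw [smul_smul, ← Real.exp_add, neg_sub, sub_eq_neg_add]

end IntegratingFactor

theorem reversible_first_integral_general {s : Set ℝ} (hs : IsOpen s) (hs' : IsPreconnected s)
    {f F q h z v a H : ℝ → ℝ}
    (hF : ∀ t ∈ s, HasDerivAt F (f (z t)) (z t))
    (hh : ∀ t ∈ s, HasDerivAt h (-2 * f (z t) * h (z t) + q (z t)) (z t))
    (hz : ∀ t ∈ s, HasDerivAt z (v t) t)
    (hv : ∀ t ∈ s, HasDerivAt v (a t) t)
    (hode : ∀ t ∈ s, a t + f (z t) * v t ^ 2 + q (z t) = 0)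
    (hH : ∀ t ∈ s, H t = 1 / 2 * v t ^ 2 + h (z t)) :
    (∀ t ∈ s, HasDerivAt H (-2 * f (z t) * v t * H t) t) ∧
    (∀ t ∈ s, ∀ t₀ ∈ s, H t * Real.exp (2 * F (z t)) = H t₀ * Real.exp (2 * F (z t₀))) ∧
    (∀ t ∈ s, ∀ t₀ ∈ s, H t = H t₀ * Real.exp (-2 * (F (z t) - F (z t₀)))) ∧
    (∀ t₀ ∈ s, v t₀ = 0 → h (z t₀) = 0 → ∀ t ∈ s, H t = 0) := by
  have H_deriv : ∀ t ∈ s, HasDerivAt H (-2 * f (z t) * v t * H t) t := fun t ht => by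
    rw [hH t ht]
    exact (hasDerivAt_half_sq_add_comp (hz t ht) (hv t ht) (hode t ht)
      (hh t ht)).congr_of_eventuallyEq (Filter.eventuallyEq_of_mem (hs.mem_nhds ht) hH)
  have weight_deriv : ∀ t ∈ s, HasDerivAt (fun τ => 2 * F (z τ)) (2 * (f (z t) * v t)) t :=
    fun t ht => ((hF t ht).comp t (hz t ht)).const_mul 2
  have H_linear : ∀ t ∈ s, HasDerivAt H (-(2 * (f (z t) * v t)) • H t) t := fun t ht =>
    (H_deriv t ht).congr_deriv (by rw [smul_eq_mul]; ring)
  have H_explicit : ∀ t ∈ s, ∀ t₀ ∈ s, H t = H t₀ * Real.exp (-2 * (F (z t) - F (z t₀))) :=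
    fun t ht t₀ ht₀ => by
      rw [eq_exp_neg_sub_smul_of_hasDerivAt_neg_smul hs hs' weight_deriv H_linear ht ht₀,
        smul_eq_mul, mul_comm, ← mul_sub, neg_mul]
  refine ⟨H_deriv, fun t ht t₀ ht₀ => ?_, H_explicit, fun t₀ ht₀ hv₀ hh₀ t ht => ?_⟩
  · simpa only [smul_eq_mul, mul_comm] using
      exp_smul_eq_of_hasDerivAt_neg_smul hs hs' weight_deriv H_linear ht ht₀
  · have H_zero : H t₀ = 0 := by rw [hH t₀ ht₀, hv₀, hh₀]; norm_num
    rw [H_explicit t ht t₀ ht₀, H_zero, zero_mul]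

/-- First integral construction for the time reversible equation `z̈ + ż² + q(z) = 0`:
with `h' = -2h + q` and `H = (1/2)ż² + h(z)` one has `H' = -2żH`, hence `H e^{2z}` is
constant; if moreover the orbit passes through `(a, 0)` with `h(a) = 0`, then `H ≡ 0`. -/
theorem reversible_first_integral
    (q h : ℝ → ℝ) (hq : Continuous q)
    (hh : ∀ x : ℝ, HasDerivAt h (-2 * h x + q x) x)
    (z : ℝ → ℝ) (hz : Differentiable ℝ z) (hz' : Differentiable ℝ (deriv z))
    (hode : ∀ t : ℝ, deriv (deriv z) t + (deriv z t) ^ 2 + q (z t) = 0)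
    (H : ℝ → ℝ) (hH : ∀ t : ℝ, H t = (1/2) * (deriv z t) ^ 2 + h (z t)) :
    (∀ t : ℝ, HasDerivAt H (-2 * deriv z t * H t) t) ∧
    (∀ t t₀ : ℝ, H t * Real.exp (2 * z t) = H t₀ * Real.exp (2 * z t₀)) ∧
    (∀ t t₀ : ℝ, H t = H t₀ * Real.exp (-2 * (z t - z t₀))) ∧
    (∀ (t₀ a : ℝ), z t₀ = a → deriv z t₀ = 0 → h a = 0 → ∀ t : ℝ, H t = 0) := by
  simpa using reversible_first_integral_general (f := 1) (F := id) (q := q) (h := h)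
    isOpen_univ isPreconnected_univ (fun t _ => hasDerivAt_id (z t))
    (fun t _ => by simpa using hh (z t)) (fun t _ => (hz t).hasDerivAt)
    (fun t _ => (hz' t).hasDerivAt) (fun t _ => by simpa using hode t) (fun t _ => hH t)
end

section
/- Let z : ℝ → ℝ be twice continuously differentiable with z''(t) + z'(t)² + z(t)² − 3·z(t) = 0 for all t ∈ ℝ, and suppose z(σ) → 0 and z'(σ) → 0 as σ → −∞. Then for every t ∈ ℝ: (1/2)·z'(t)² = e^{−2z(t)} − 1 + 2·z(t) − (1/2)·z(t)². In particular, the homoclinic orbit of z̈ + ż² + z² − 3z = 0 to the hyperbolic equilibrium z = 0 lies on the zero level set of the first integral H = (1/2)ż² − (e^{−2z} − 1 + 2z − (1/2)z²). -/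
/-! For `z̈ + a(z) ż² + q(z) = 0` choose `h` with `h' = q - 2ah`. Then `E = ż²/2 + h(z)` solves the
linear equation `E' = -2 a(z) ż E`, so `e^{2A(z)} E` is constant for any primitive `A` of `a`.
If the orbit approaches an equilibrium `c` with `h(c) = 0`, this constant is zero. -/

open Filter Real Topology

section IntegratingFactor

variable {F : Type*} [NormedAddCommGroup F] [NormedSpace ℝ F] {f f' : ℝ → ℝ} {E : ℝ → F}

theorem exp_smul_eq_exp_smul_of_hasDerivAt (hf : ∀ t, HasDerivAt f (f' t) t)
    (hE : ∀ t, HasDerivAt E (-f' t • E t) t) (s t : ℝ) :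
    exp (f s) • E s = exp (f t) • E t := by
  have hderiv (r : ℝ) : HasDerivAt (fun r => exp (f r) • E r) 0 r :=
    ((hf r).exp.smul (hE r)).congr_deriv (by module)
  exact is_const_of_deriv_eq_zero (fun r => (hderiv r).differentiableAt)
    (fun r => (hderiv r).deriv) s t

theorem eq_zero_of_hasDerivAt_neg_smul_of_tendsto {l : Filter ℝ} [l.NeBot]
    (hf : ∀ t, HasDerivAt f (f' t) t) (hE : ∀ t, HasDerivAt E (-f' t • E t) t)
    (hfl : l.IsBoundedUnder (· ≤ ·) f) (hEl : Tendsto E l (𝓝 0)) (t : ℝ) : E t = 0 := by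
  have hbdd : l.IsBoundedUnder (· ≤ ·) (fun s => ‖exp (f s)‖) := by
    simpa only [norm_eq_abs, abs_exp, Function.comp_def] using
      exp_monotone.isBoundedUnder_le_comp hfl
  have hzero : Tendsto (fun s => exp (f s) • E s) l (𝓝 0) := hbdd.smul_tendsto_zero hEl
  have hconst : Tendsto (fun s => exp (f s) • E s) l (𝓝 (exp (f t) • E t)) :=
    tendsto_const_nhds.congr (exp_smul_eq_exp_smul_of_hasDerivAt hf hE t)
  exact (smul_eq_zero_iff_right (exp_ne_zero (f t))).mp (tendsto_nhds_unique hconst hzero)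

end IntegratingFactor

/-- The first integral `H(x, v²/2) = v²/2 + h(x)` of a time-reversible second-order equation, as a
function of position `x` and velocity `v`. In general only its zero level set is invariant. -/
noncomputable def firstIntegral (h : ℝ → ℝ) (x v : ℝ) : ℝ :=
  v ^ 2 / 2 + h x

theorem hasDerivAt_firstIntegral {h z v : ℝ → ℝ} {t a q : ℝ}
    (hh : HasDerivAt h (q - 2 * a * h (z t)) (z t)) (hz : HasDerivAt z (v t) t)
    (hv : HasDerivAt v (-(a * v t ^ 2 + q)) t) :
    HasDerivAt (fun s => firstIntegral h (z s) (v s))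
      (-(2 * (a * v t)) * firstIntegral h (z t) (v t)) t := by
  refine (((hv.pow 2).div_const 2).add (hh.comp t hz)).congr_deriv ?_
  simp only [firstIntegral]
  ring

theorem tendsto_firstIntegral_zero {ι : Type*} {l : Filter ι} {h : ℝ → ℝ} {z v : ι → ℝ} {c : ℝ}
    (hh : ContinuousAt h c) (hc : h c = 0) (hz : Tendsto z l (𝓝 c)) (hv : Tendsto v l (𝓝 0)) :
    Tendsto (fun s => firstIntegral h (z s) (v s)) l (𝓝 0) := by
  simpa [firstIntegral, hc] using ((hv.pow 2).div_const 2).add (hh.tendsto.comp hz)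

theorem reversible_homoclinic_integral_general {a A q h z : ℝ → ℝ} {c : ℝ} {l : Filter ℝ} [l.NeBot]
    (hA : ∀ x, HasDerivAt A (a x) x) (hh : ∀ x, HasDerivAt h (q x - 2 * a x * h x) x)
    (hc : h c = 0) (hz : Differentiable ℝ z) (hz' : Differentiable ℝ (deriv z))
    (hode : ∀ t, deriv (deriv z) t + a (z t) * deriv z t ^ 2 + q (z t) = 0)
    (hlim : Tendsto z l (𝓝 c)) (hlim' : Tendsto (deriv z) l (𝓝 0)) (t : ℝ) :
    firstIntegral h (z t) (deriv z t) = 0 := by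
  have hAz (s : ℝ) : HasDerivAt (fun s => 2 * A (z s)) (2 * (a (z s) * deriv z s)) s :=
    ((hA (z s)).comp s (hz s).hasDerivAt).const_mul 2
  have hH (s : ℝ) : HasDerivAt (fun s => firstIntegral h (z s) (deriv z s))
      (-(2 * (a (z s) * deriv z s)) * firstIntegral h (z s) (deriv z s)) s :=
    hasDerivAt_firstIntegral (hh (z s)) (hz s).hasDerivAt
      ((hz' s).hasDerivAt.congr_deriv (by linear_combination hode s))
  have hAlim : Tendsto (fun s => 2 * A (z s)) l (𝓝 (2 * A c)) :=
    ((hA c).continuousAt.tendsto.comp hlim).const_mul 2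
  exact eq_zero_of_hasDerivAt_neg_smul_of_tendsto hAz hH hAlim.isBoundedUnder_le
    (tendsto_firstIntegral_zero (hh c).continuousAt hc hlim hlim') t

/-- The solution `h` of `h' = -2h + q`, `h(0) = 0`, for the nonlinearity `q(x) = x² - 3x`; it is
the position-dependent part of the first integral of `z̈ + ż² + z² - 3z = 0`. -/
noncomputable def homoclinicPotential (x : ℝ) : ℝ :=
  x ^ 2 / 2 - 2 * x + 1 - exp (-2 * x)

theorem homoclinicPotential_zero : homoclinicPotential 0 = 0 := by
  simp [homoclinicPotential]

theorem hasDerivAt_homoclinicPotential (x : ℝ) :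
    HasDerivAt homoclinicPotential ((x ^ 2 - 3 * x) - 2 * 1 * homoclinicPotential x) x := by
  have hlin (k : ℝ) : HasDerivAt (fun y : ℝ => k * y) (k * 1) x := (hasDerivAt_id x).const_mul k
  refine (((((hasDerivAt_pow 2 x).div_const 2).sub (hlin 2)).add_const 1).sub
    (hlin (-2)).exp).congr_deriv ?_
  simp only [homoclinicPotential]
  ring

/-- The homoclinic orbit of `z̈ + ż² + z² - 3z = 0` to the hyperbolic equilibrium `z = 0`
lies on the zero level of the first integral:
`(1/2)ż² = e^{-2z} - 1 + 2z - (1/2)z²`. -/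
theorem reversible_homoclinic_integral
    (z : ℝ → ℝ) (hz : ContDiff ℝ 2 z)
    (hode : ∀ t : ℝ, deriv (deriv z) t + (deriv z t) ^ 2 + (z t) ^ 2 - 3 * z t = 0)
    (hlim : Filter.Tendsto z Filter.atBot (nhds 0))
    (hlim' : Filter.Tendsto (deriv z) Filter.atBot (nhds 0)) :
    ∀ t : ℝ, (1/2) * (deriv z t) ^ 2 =
      Real.exp (-2 * z t) - 1 + 2 * z t - (1/2) * (z t) ^ 2 := by
  intro t
  have hH : firstIntegral homoclinicPotential (z t) (deriv z t) = 0 :=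
    reversible_homoclinic_integral_general hasDerivAt_id hasDerivAt_homoclinicPotential
      homoclinicPotential_zero (hz.differentiable two_ne_zero) hz.differentiable_deriv_two
      (fun s => by linear_combination hode s) hlim hlim' t
  simp only [firstIntegral, homoclinicPotential] at hH
  linear_combination hH
end

section
/- Let H : ℝ × ℝ → ℝ be continuously differentiable, with partial derivatives H_x (in the first variable) and H_p (in the second variable), and assume H_p(x, p) ≠ 0 for all (x, p). Let λ ∈ ℝ, and let z : ℝ → ℝ be twice differentiable such that, writing p(t) := (1/2)·z'(t)², the damped equation z''(t) + (H(z(t), p(t)) − λ)·z'(t)/H_p(z(t), p(t)) + H_x(z(t), p(t))/H_p(z(t), p(t)) = 0 holds for all t ∈ ℝ. Then for all t: d/dt [H(z(t), p(t))] = (λ − H(z(t), p(t)))·z'(t)². In particular, H relaxes monotonically towards the level set {H = λ} along solutions. -/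
theorem add_mul_eq_of_damped_equation {K : Type*} [Field K] {h Hx Hp lam v a : K} (hHp : Hp ≠ 0)
    (hode : a + (h - lam) * v / Hp + Hx / Hp = 0) :
    Hx + Hp * a = (lam - h) * v := by
  have hode_mul : Hp * a + (h - lam) * v + Hx = 0 := by
    field_simp at hode
    linear_combination hode
  linear_combination hode_mul

section

variable {𝕜 : Type*} [NontriviallyNormedField 𝕜] [NeZero (2 : 𝕜)]

theorem hasDerivAt_half_mul_sq {v : 𝕜 → 𝕜} {a t : 𝕜} (hv : HasDerivAt v a t) :
    HasDerivAt (fun s ↦ (1 / 2) * v s ^ 2) (v t * a) t :=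
  ((hv.fun_pow 2).const_mul (1 / 2)).congr_deriv <| by
    field_simp [two_ne_zero (α := 𝕜)]
    ring

theorem hasDerivAt_comp_half_mul_sq {H : 𝕜 → 𝕜 → 𝕜} {z v : 𝕜 → 𝕜} {Hx Hp a t : 𝕜}
    (hH : HasFDerivAt (fun q : 𝕜 × 𝕜 ↦ H q.1 q.2)
      (Hx • ContinuousLinearMap.fst 𝕜 𝕜 𝕜 + Hp • ContinuousLinearMap.snd 𝕜 𝕜 𝕜)
      (z t, (1 / 2) * v t ^ 2))
    (hz : HasDerivAt z (v t) t) (hv : HasDerivAt v a t) :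
    HasDerivAt (fun s ↦ H (z s) ((1 / 2) * v s ^ 2)) ((Hx + Hp * a) * v t) t := by
  have hchain := hH.comp_hasDerivAt t (hz.prodMk (hasDerivAt_half_mul_sq hv))
  refine hchain.congr_deriv ?_
  change Hx * v t + Hp * (v t * a) = (Hx + Hp * a) * v t
  ring

theorem damped_embedding_relaxation_general {H : 𝕜 → 𝕜 → 𝕜} {z v : 𝕜 → 𝕜} {Hx Hp lam a t : 𝕜}
    (hH : HasFDerivAt (fun q : 𝕜 × 𝕜 ↦ H q.1 q.2)
      (Hx • ContinuousLinearMap.fst 𝕜 𝕜 𝕜 + Hp • ContinuousLinearMap.snd 𝕜 𝕜 𝕜)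
      (z t, (1 / 2) * v t ^ 2))
    (hHp : Hp ≠ 0) (hz : HasDerivAt z (v t) t) (hv : HasDerivAt v a t)
    (hode : a + (H (z t) ((1 / 2) * v t ^ 2) - lam) * v t / Hp + Hx / Hp = 0) :
    HasDerivAt (fun s ↦ H (z s) ((1 / 2) * v s ^ 2))
      ((lam - H (z t) ((1 / 2) * v t ^ 2)) * v t ^ 2) t := by
  refine (hasDerivAt_comp_half_mul_sq hH hz hv).congr_deriv ?_
  rw [add_mul_eq_of_damped_equation hHp hode]
  ring

end

/-- Relaxation identity for the damped embedding
`z̈ + (H - λ)ż/H_p + H_x/H_p = 0` of a pendulum with first integral `H(z, (1/2)ż²)`: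
along solutions, `d/dt H(z, (1/2)ż²) = (λ - H)ż²`; in particular `H` relaxes towards
the level set `{H = λ}`. -/
theorem damped_embedding_relaxation
    (H Hx Hp : ℝ → ℝ → ℝ)
    (hH : ∀ x p : ℝ, HasFDerivAt (fun q : ℝ × ℝ => H q.1 q.2)
      (Hx x p • ContinuousLinearMap.fst ℝ ℝ ℝ + Hp x p • ContinuousLinearMap.snd ℝ ℝ ℝ)
      (x, p))
    (hHxc : Continuous fun q : ℝ × ℝ => Hx q.1 q.2)
    (hHpc : Continuous fun q : ℝ × ℝ => Hp q.1 q.2)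
    (hHp : ∀ x p : ℝ, Hp x p ≠ 0)
    (lam : ℝ) (z : ℝ → ℝ)
    (hz : Differentiable ℝ z) (hz' : Differentiable ℝ (deriv z))
    (hode : ∀ t : ℝ, deriv (deriv z) t +
      (H (z t) ((1/2) * (deriv z t) ^ 2) - lam) * deriv z t /
        Hp (z t) ((1/2) * (deriv z t) ^ 2) +
      Hx (z t) ((1/2) * (deriv z t) ^ 2) / Hp (z t) ((1/2) * (deriv z t) ^ 2) = 0) :
    ∀ t : ℝ, HasDerivAt (fun s : ℝ => H (z s) ((1/2) * (deriv z s) ^ 2))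
      ((lam - H (z t) ((1/2) * (deriv z t) ^ 2)) * (deriv z t) ^ 2) t :=
  fun t ↦ damped_embedding_relaxation_general (hH _ _) (hHp _ _) (hz t).hasDerivAt
    (hz' t).hasDerivAt (hode t)
end
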